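/- Let v be a vertex of tenacity t ≤ l_m, and let p be a maxlevel(v) path. Then there exists exactly one bridge of tenacity t on p. -/

import Mathlib

attribute [local instance] Classical.propDecidable

variable {V : Type*} [DecidableEq V]

namespace MV

/-- A walk is alternating (w.r.t. matching `M`) in the sense used for alternating paths
starting at an unmatched vertex: the `i`-th edge is matched iff `i` is odd. -/
def IsAlt (G : SimpleGraph V) (M : G.Subgraph) {a b : V} (w : G.Walk a b) : Prop :=
  ∀ i (h : i < w.edges.length), (w.edges.get ⟨i, h⟩ ∈ M.edgeSet ↔ Odd i)

/-- length of a minimum even alternating path from an unmatched vertex to `v`. -/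
noncomputable def evenlevel (G : SimpleGraph V) (M : G.Subgraph) (v : V) : ℕ∞ :=
  sInf {n : ℕ∞ | ∃ (f : V) (w : G.Walk f v),
    f ∉ M.verts ∧ w.IsPath ∧ IsAlt G M w ∧ Even w.length ∧ n = (w.length : ℕ∞)}

/-- length of a minimum odd alternating path from an unmatched vertex to `v`. -/
noncomputable def oddlevel (G : SimpleGraph V) (M : G.Subgraph) (v : V) : ℕ∞ :=
  sInf {n : ℕ∞ | ∃ (f : V) (w : G.Walk f v),
    f ∉ M.verts ∧ w.IsPath ∧ IsAlt G M w ∧ Odd w.length ∧ n = (w.length : ℕ∞)}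

noncomputable def tenacity (G : SimpleGraph V) (M : G.Subgraph) (v : V) : ℕ∞ :=
  evenlevel G M v + oddlevel G M v

noncomputable def minlevel (G : SimpleGraph V) (M : G.Subgraph) (v : V) : ℕ∞ :=
  min (evenlevel G M v) (oddlevel G M v)

noncomputable def maxlevel (G : SimpleGraph V) (M : G.Subgraph) (v : V) : ℕ∞ :=
  max (evenlevel G M v) (oddlevel G M v)

/-- the length of a minimum length augmenting path w.r.t. `M` (`⊤` if none exists). -/
noncomputable def lm (G : SimpleGraph V) (M : G.Subgraph) : ℕ∞ :=
  sInf {n : ℕ∞ | ∃ (f g : V) (w : G.Walk f g), f ∉ M.verts ∧ g ∉ M.verts ∧ f ≠ g ∧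
    w.IsPath ∧ IsAlt G M w ∧ Odd w.length ∧ n = (w.length : ℕ∞)}

/-- `w` is a minimum even- or odd-length alternating path from an unmatched vertex to `v`
  (an `evenlevel(v)` or `oddlevel(v)` path). -/
def IsMinPathTo (G : SimpleGraph V) (M : G.Subgraph) (v f : V) (w : G.Walk f v) : Prop :=
  f ∉ M.verts ∧ w.IsPath ∧ IsAlt G M w ∧
    ((Even w.length ∧ (w.length : ℕ∞) = evenlevel G M v) ∨
     (Odd w.length ∧ (w.length : ℕ∞) = oddlevel G M v))

/-- `b` is the vertex of tenacity greater than `tenacity v` on `w` furthest from the start. -/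
def IsFurthestHigh (G : SimpleGraph V) (M : G.Subgraph) (v : V) {f v' : V}
    (w : G.Walk f v') (b : V) : Prop :=
  ∃ hb : b ∈ w.support, tenacity G M v < tenacity G M b ∧
    ∀ u, ∀ hu : u ∈ w.support, tenacity G M v < tenacity G M u →
      (w.takeUntil u hu).length ≤ (w.takeUntil b hb).length

/-- `b` is the base of `v`: the furthest higher-tenacity vertex on every minimum
even or odd alternating path to `v`. -/
def IsBase (G : SimpleGraph V) (M : G.Subgraph) (v b : V) : Prop :=
  ∀ (f : V) (w : G.Walk f v), IsMinPathTo G M v f w → IsFurthestHigh G M v w b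

/-- minimum even length alternating path from `b` to `v` starting with an unmatched edge
  (`evenlevel(b; v)`). -/
noncomputable def evenlevelFrom (G : SimpleGraph V) (M : G.Subgraph) (b v : V) : ℕ∞ :=
  sInf {n : ℕ∞ | ∃ w : G.Walk b v,
    w.IsPath ∧ IsAlt G M w ∧ Even w.length ∧ n = (w.length : ℕ∞)}

/-- minimum odd length alternating path from `b` to `v` starting with an unmatched edge
  (`oddlevel(b; v)`). -/
noncomputable def oddlevelFrom (G : SimpleGraph V) (M : G.Subgraph) (b v : V) : ℕ∞ :=
  sInf {n : ℕ∞ | ∃ w : G.Walk b v,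
    w.IsPath ∧ IsAlt G M w ∧ Odd w.length ∧ n = (w.length : ℕ∞)}

def Outer (G : SimpleGraph V) (M : G.Subgraph) (v : V) : Prop :=
  evenlevel G M v < oddlevel G M v

/-- The blossom `B_{b,t}`, defined recursively, relative to a base function `bse`. -/
noncomputable def blossom (G : SimpleGraph V) (M : G.Subgraph) (bse : V → V) :
    ℕ → V → Set V
  | 0, _ => ∅
  | 1, _ => ∅
  | (t + 2), b =>
      {v | tenacity G M v = ((t + 2 : ℕ) : ℕ∞) ∧ bse v = b} ∪
      ⋃ v ∈ {u | (u = b ∨ (tenacity G M u = ((t + 2 : ℕ) : ℕ∞) ∧ bse u = b)) ∧ Outer G M u},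
        blossom G M bse t v

/-- The nesting depth `N(B_{b,t})`. -/
noncomputable def nestDepth (G : SimpleGraph V) (M : G.Subgraph) (bse : V → V) :
    ℕ → V → ℕ
  | 0, _ => 0
  | 1, _ => 0
  | (t + 2), b =>
      if {v | tenacity G M v = ((t + 2 : ℕ) : ℕ∞) ∧ bse v = b}.Nonempty then
        1 + sSup ((fun v => nestDepth G M bse t v) ''
          {u | (u = b ∨ (tenacity G M u = ((t + 2 : ℕ) : ℕ∞) ∧ bse u = b)) ∧ Outer G M u})
      else nestDepth G M bse t b

/-- `bse` assigns to each vertex of tenacity `< l_m` its (unique) base. -/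
def BaseFn (G : SimpleGraph V) (M : G.Subgraph) (bse : V → V) : Prop :=
  ∀ v, tenacity G M v < lm G M → IsBase G M v (bse v)

/-- `u` is a predecessor of `v`: `(u,v)` is the last edge of some `minlevel(v)` path. -/
def IsPred (G : SimpleGraph V) (M : G.Subgraph) (u v : V) : Prop :=
  ∃ (f : V) (w : G.Walk f v), f ∉ M.verts ∧ w.IsPath ∧ IsAlt G M w ∧
    (w.length : ℕ∞) = minlevel G M v ∧
    0 < w.length ∧ w.getVert (w.length - 1) = u

/-- A bridge is an edge of `G` that is not a prop. -/
def IsBridge (G : SimpleGraph V) (M : G.Subgraph) (u v : V) : Prop :=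
  G.Adj u v ∧ ¬ IsPred G M u v ∧ ¬ IsPred G M v u

/-- tenacity of an edge. -/
noncomputable def edgeTenacity (G : SimpleGraph V) (M : G.Subgraph) (u v : V) : ℕ∞ :=
  if s(u, v) ∈ M.edgeSet then oddlevel G M u + oddlevel G M v + 1
  else evenlevel G M u + evenlevel G M v + 1

/-!
Think of a path as a sequence of arcs, each charged at the step at which it is used. For tenacity
`2 * n + 1`, put a potential on every vertex and consider, for every `j ≤ n`, the components of the
graph formed by the edges of tenacity at most `2 * j`. The levels provide a linear programming dual:
the reduced cost (`slack`) of every arc is nonnegative, and a path that meets each component only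
through its apex, the only vertex of tenacity more than `2 * j` in it, pays the minimum. A path
whose length equals the level of its end has total slack zero, so each of its arcs is tight. Tight
arcs first lead away from the exposed vertex and from some step on lead back; the arc of the single
turn is the bridge.

That a component has at most one apex is proved by induction on `j`: for each vertex the last vertex
of higher tenacity on a shortest path to it does not depend on the path, and it is the same for the
two ends of an edge of tenacity at most `2 * j`, hence constant on the component.
-/

/-! ### Alternating paths and levels -/

section AltSeq

variable {α : Type*} {edge : ℕ → SimpleGraph α} {x y : ℕ → α} {a b c i L N : ℕ}

/-- An alternating path with vertices `x 0, …, x L` that starts at an exposed vertex. The graph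
`edge i` consists of the edges allowed at step `i`; in the application it depends on the parity of
`i` only, and `edge 1` is the matching. -/
structure IsAltSeq (edge : ℕ → SimpleGraph α) (x : ℕ → α) (L : ℕ) : Prop where
  exposed : ∀ v, ¬(edge 1).Adj (x 0) v
  inj : ∀ {i j}, i ≤ L → j ≤ L → x i = x j → i = j
  adj : ∀ {i}, i < L → (edge i).Adj (x i) (x (i + 1))

/-- The sequence that follows `y` up to index `c` and `x` from index `c + 1` on. -/
def splice (y : ℕ → α) (c : ℕ) (x : ℕ → α) (i : ℕ) : α :=
  if i ≤ c then y i else x i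

theorem splice_of_le (h : i ≤ c) : splice y c x i = y i := if_pos h

theorem splice_of_lt (h : c < i) : splice y c x i = x i := if_neg h.not_ge

namespace IsAltSeq

theorem take (hx : IsAltSeq edge x L) (h : i ≤ L) : IsAltSeq edge x i where
  exposed := hx.exposed
  inj hj hk := hx.inj (hj.trans h) (hk.trans h)
  adj hj := hx.adj (hj.trans_le h)

theorem splice (hy : IsAltSeq edge y a) (hc : c ≤ a)
    (hinj : ∀ i j, c < i → i ≤ L → c < j → j ≤ L → x i = x j → i = j)
    (hdisj : ∀ i j, i ≤ c → c < j → j ≤ L → y i ≠ x j)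
    (hstep : c < L → (edge c).Adj (y c) (x (c + 1)))
    (hadj : ∀ i, c < i → i < L → (edge i).Adj (x i) (x (i + 1))) :
    IsAltSeq edge (splice y c x) L where
  exposed := by simpa only [splice_of_le (Nat.zero_le c)] using hy.exposed
  inj {i j} hi hj h := by
    rcases le_or_gt i c with hic | hic <;> rcases le_or_gt j c with hjc | hjc
    · rw [splice_of_le hic, splice_of_le hjc] at h
      exact hy.inj (hic.trans hc) (hjc.trans hc) h
    · rw [splice_of_le hic, splice_of_lt hjc] at h
      exact absurd h (hdisj i j hic hjc hj)
    · rw [splice_of_lt hic, splice_of_le hjc] at h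
      exact absurd h.symm (hdisj j i hjc hic hi)
    · rw [splice_of_lt hic, splice_of_lt hjc] at h
      exact hinj i j hic hi hjc hj h
  adj {i} hi := by
    rcases lt_trichotomy i c with hic | rfl | hic
    · rw [splice_of_le hic.le, splice_of_le hic]
      exact hy.adj (hic.trans_le hc)
    · rw [splice_of_le le_rfl, splice_of_lt i.lt_succ_self]
      exact hstep hi
    · rw [splice_of_lt hic, splice_of_lt (hic.trans i.lt_succ_self)]
      exact hadj i hic hi

theorem snoc {v : α} (hy : IsAltSeq edge y c) (hv : ∀ i ≤ c, y i ≠ v)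
    (h : (edge c).Adj (y c) v) : IsAltSeq edge (MV.splice y c fun _ ↦ v) (c + 1) :=
  hy.splice le_rfl (by omega) (fun i _ hi _ _ ↦ hv i hi) (fun _ ↦ h) (by omega)

/-- Since `N` is odd, the step from `N - i` back to `N - (i + 1)` has the parity of `i`. -/
theorem splice_reverse (hedge : ∀ {i j}, i % 2 = j % 2 → edge i = edge j)
    (hy : IsAltSeq edge y a) (hx : IsAltSeq edge x b) (hN : N % 2 = 1) (hca : c ≤ a)
    (hLN : L ≤ N) (hNb : N ≤ b + c + 1)
    (hdisj : ∀ i j, i ≤ c → N - L ≤ j → j + c < N → y i ≠ x j)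
    (hstep : c < L → (edge c).Adj (y c) (x (N - (c + 1)))) :
    IsAltSeq edge (MV.splice y c fun i ↦ x (N - i)) L := by
  refine hy.splice hca (fun i j hi hiL hj hjL h ↦ ?_) (fun i j hi hj hjL ↦ ?_) hstep
    fun i hci hi ↦ ?_
  · have := hx.inj (by omega) (by omega) h
    omega
  · exact hdisj i _ hi (by omega) (by omega)
  · have h := hx.adj (show N - (i + 1) < b by omega)
    rw [show N - (i + 1) + 1 = N - i by omega,
      hedge (show (N - (i + 1)) % 2 = i % 2 by omega)] at h
    exact h.symm

end IsAltSeq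

end AltSeq

/-- Abstract alternating levels. `edge 0` and `edge 1` are the unmatched and the matched edges,
`level 0` and `level 1` the even and the odd level; other indices matter only modulo 2, so that
index `i` can be used at step `i` of a path. Levels may be truncated, but those up to `bound` are
lengths of alternating paths; `bound` is also a lower bound for the length of augmenting paths. -/
structure AltLevels (α : Type*) where
  edge : ℕ → SimpleGraph α
  level : ℕ → α → ℕ
  bound : ℕ
  edge_congr : ∀ {i j}, i % 2 = j % 2 → edge i = edge j
  level_congr : ∀ {i j}, i % 2 = j % 2 → level i = level j
  level_mod_two : ∀ i a, level i a % 2 = i % 2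
  disjoint_edge : ∀ {a b}, (edge 0).Adj a b → ¬(edge 1).Adj a b
  level_le : ∀ {x L}, IsAltSeq edge x L → level L (x L) ≤ L
  exists_altSeq : ∀ {i a}, level i a ≤ bound →
    ∃ x, IsAltSeq edge x (level i a) ∧ x (level i a) = a
  level_zero_of_matched : ∀ {a b}, (edge 1).Adj a b → level 0 a = level 1 b + 1
  bound_le : ∀ {x L}, IsAltSeq edge x L → L % 2 = 1 → (∀ b, ¬(edge 1).Adj (x L) b) → bound ≤ L

namespace AltLevels

variable {α : Type*} (S : AltLevels α) {a b u v z : α} {p s x y : ℕ → α}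
variable {c h i j k l m n L β γ : ℕ}

/-- The even level of a vertex. -/
def ev (a : α) : ℕ := S.level 0 a

/-- The odd level of a vertex. -/
def od (a : α) : ℕ := S.level 1 a

/-- The tenacity of a vertex. -/
def ten (a : α) : ℕ := S.ev a + S.od a

/-- The tenacity of an edge that is usable at step `i`. -/
def edgeTen (i : ℕ) (a b : α) : ℕ := S.level i a + S.level i b + 1

/-- Alternating paths from an exposed vertex, see `IsAltSeq`. -/
abbrev IsPath (x : ℕ → α) (L : ℕ) : Prop := IsAltSeq S.edge x L

theorem level_of_even (hi : i % 2 = 0) (a : α) : S.level i a = S.ev a :=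
  congrFun (S.level_congr (show i % 2 = 0 % 2 from hi)) a

theorem level_of_odd (hi : i % 2 = 1) (a : α) : S.level i a = S.od a :=
  congrFun (S.level_congr (show i % 2 = 1 % 2 from hi)) a

theorem edge_of_even (hi : i % 2 = 0) : S.edge i = S.edge 0 := S.edge_congr hi

theorem edge_of_odd (hi : i % 2 = 1) : S.edge i = S.edge 1 := S.edge_congr hi

theorem ev_mod_two (a : α) : S.ev a % 2 = 0 := S.level_mod_two 0 a

theorem od_mod_two (a : α) : S.od a % 2 = 1 := S.level_mod_two 1 a

theorem ten_mod_two (a : α) : S.ten a % 2 = 1 := by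
  have := S.ev_mod_two a
  have := S.od_mod_two a
  unfold ten
  omega

theorem edgeTen_comm (i : ℕ) (a b : α) : S.edgeTen i a b = S.edgeTen i b a := by
  unfold edgeTen
  omega

theorem edgeTen_mod_two (i : ℕ) (a b : α) : S.edgeTen i a b % 2 = 1 := by
  have := S.level_mod_two i a
  have := S.level_mod_two i b
  unfold edgeTen
  omega

variable {S}

theorem edgeTen_of_even (hi : i % 2 = 0) : S.edgeTen i a b = S.ev a + S.ev b + 1 := by
  rw [edgeTen, S.level_of_even hi, S.level_of_even hi]

theorem edgeTen_of_odd (hi : i % 2 = 1) : S.edgeTen i a b = S.od a + S.od b + 1 := by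
  rw [edgeTen, S.level_of_odd hi, S.level_of_odd hi]

theorem ev_eq_of_matched (h : (S.edge 1).Adj a b) : S.ev a = S.od b + 1 :=
  S.level_zero_of_matched h

theorem edgeTen_of_matched (h : (S.edge 1).Adj a b) : S.edgeTen 1 a b = S.ten a := by
  rw [edgeTen_of_odd rfl, ten, ev_eq_of_matched h]
  omega

theorem ten_eq_of_matched (h : (S.edge 1).Adj a b) : S.ten a = S.ten b := by
  rw [← edgeTen_of_matched h, edgeTen_comm, edgeTen_of_matched h.symm]

theorem exists_path_ev (h : S.ev a ≤ S.bound) : ∃ x, S.IsPath x (S.ev a) ∧ x (S.ev a) = a :=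
  S.exists_altSeq h

theorem exists_path_od (h : S.od a ≤ S.bound) : ∃ x, S.IsPath x (S.od a) ∧ x (S.od a) = a :=
  S.exists_altSeq h

theorem IsPath.ev_start_eq_zero (hx : S.IsPath x L) : S.ev (x 0) = 0 :=
  Nat.le_zero.mp (S.level_le (hx.take (Nat.zero_le L)))

theorem IsPath.bound_le_ten_start (hx : S.IsPath x L) : S.bound ≤ S.ten (x 0) := by
  suffices h : S.bound ≤ S.od (x 0) from h.trans (Nat.le_add_left _ _)
  by_contra! h
  obtain ⟨y, hy, hyx⟩ := exists_path_od h.le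
  exact h.not_ge (S.bound_le hy (S.od_mod_two _) (hyx.symm ▸ hx.exposed))

theorem IsPath.ev_le (hx : S.IsPath x L) (hi : i ≤ L) (hpar : i % 2 = 0) : S.ev (x i) ≤ i :=
  S.level_of_even hpar (x i) ▸ S.level_le (hx.take hi)

theorem IsPath.od_le (hx : S.IsPath x L) (hi : i ≤ L) (hpar : i % 2 = 1) : S.od (x i) ≤ i :=
  S.level_of_odd hpar (x i) ▸ S.level_le (hx.take hi)

theorem od_le_ev_add_one (hab : (S.edge 0).Adj a b) (hle : S.ev a ≤ S.ev b)
    (ha : S.ev a ≤ S.bound) : S.od b ≤ S.ev a + 1 := by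
  obtain ⟨x, hx, hxa⟩ := exists_path_ev ha
  have hpar := S.ev_mod_two a
  by_cases hb : ∀ i ≤ S.ev a, x i ≠ b
  · have hadj : (S.edge (S.ev a)).Adj (x (S.ev a)) b := by rwa [hxa, S.edge_of_even hpar]
    have hle := S.level_le (hx.snoc hb hadj)
    rwa [splice_of_lt (Nat.lt_succ_self _), S.level_of_odd (by omega)] at hle
  · push Not at hb
    obtain ⟨i, hi, rfl⟩ := hb
    rcases Nat.mod_two_eq_zero_or_one i with hi2 | hi2
    · have hbi := IsPath.ev_le hx hi hi2
      obtain rfl : i = S.ev a := by omega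
      exact absurd hxa hab.ne'
    · have := IsPath.od_le hx hi hi2
      omega

theorem IsPath.ten_le (hx : S.IsPath x l) (hy : S.IsPath y c) (h : x l = y c)
    (hpar : (l + c) % 2 = 1) : S.ten (x l) ≤ l + c := by
  rcases Nat.mod_two_eq_zero_or_one l with hl | hl
  · exact Nat.add_le_add (hx.ev_le le_rfl hl) (h ▸ hy.od_le le_rfl (by omega))
  · rw [add_comm l]
    exact Nat.add_le_add (h ▸ hy.ev_le le_rfl (by omega)) (hx.od_le le_rfl hl)

/-- The graph of all edges of tenacity at most `2 * j`. Its components play the role of the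
blossoms of that tenacity. -/
def low (S : AltLevels α) (j : ℕ) : SimpleGraph α where
  Adj a b := ∃ i, (S.edge i).Adj a b ∧ S.edgeTen i a b ≤ 2 * j
  symm := ⟨fun a b ⟨i, h, hle⟩ ↦ ⟨i, h.symm, S.edgeTen_comm i a b ▸ hle⟩⟩
  loopless := ⟨fun _ ⟨_, h, _⟩ ↦ h.ne rfl⟩

/-- Each component of `S.low j` has at most one vertex of tenacity more than `2 * j`. -/
def UniqueApex (S : AltLevels α) (j : ℕ) : Prop :=
  ∀ {a b}, (S.low j).Reachable a b → 2 * j < S.ten a → 2 * j < S.ten b → a = b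

theorem low_mono : Monotone S.low := fun _ _ hjk _ _ ⟨i, h, hle⟩ ↦ ⟨i, h, by omega⟩

theorem low_reachable_iff_of_matched (hS : S.UniqueApex j) (h : (S.edge 1).Adj a b) :
    (S.low j).Reachable a b ↔ S.ten a ≤ 2 * j := by
  refine ⟨fun hab ↦ ?_, fun hle ↦ SimpleGraph.Adj.reachable ⟨1, h, edgeTen_of_matched h ▸ hle⟩⟩
  by_contra! hlt
  exact h.ne (hS hab hlt (ten_eq_of_matched h ▸ hlt))

/-! ### Potentials and slack -/

/-- The situation reached when all tenacities below `2 * n + 1` have been dealt with. -/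
structure Regular (S : AltLevels α) (n : ℕ) : Prop where
  lt_bound : 2 * n < S.bound
  apex : ∀ j ≤ n, S.UniqueApex j

/-- The vertices whose even level is the relevant one for paths of tenacity `2 * n + 1`. -/
def EvenType (S : AltLevels α) (n : ℕ) (a : α) : Prop := S.ev a ≤ n ∨ S.ten a ≤ 2 * n

/-- The vertex potential for tenacity `2 * n + 1`. Its zero point is the distance `n + 1 / 2` of
the middle of a path of that tenacity; the factor 2 keeps it integral. -/
noncomputable def potential (S : AltLevels α) (n : ℕ) (a : α) : ℤ :=
  if S.EvenType n a then 2 * S.ev a - (2 * n + 1) else max 0 (2 * n + 1 - 2 * S.od a)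

/-- The number of `j ≤ n` for which `a` and `b` lie in the same component of `S.low j`. -/
noncomputable def linkCount (S : AltLevels α) (n : ℕ) (a b : α) : ℕ :=
  Finset.card {j ∈ Finset.range (n + 1) | (S.low j).Reachable a b}

/-- The slack of an edge used at step `i`: the reduced cost of the arc with respect to the vertex
potential and to the components of all `S.low j` with `j ≤ n`. -/
noncomputable def slack (S : AltLevels α) (n i : ℕ) (a b : α) : ℤ :=
  2 + (-1) ^ i * (S.potential n a + S.potential n b + 4 * S.linkCount n a b)

theorem evenType_of_ten_le (h : S.ten a ≤ 2 * n) : S.EvenType n a := Or.inr h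

theorem potential_of_evenType (h : S.EvenType n a) : S.potential n a = 2 * S.ev a - (2 * n + 1) :=
  if_pos h

theorem potential_of_not_evenType (h : ¬S.EvenType n a) :
    S.potential n a = max 0 (2 * n + 1 - 2 * S.od a : ℤ) :=
  if_neg h

theorem sub_le_linkCount (h : (S.low m).Reachable a b) : n + 1 - m ≤ S.linkCount n a b := by
  rw [← Nat.card_Ico]
  refine Finset.card_le_card fun j hj ↦ ?_
  rw [Finset.mem_Ico] at hj
  exact Finset.mem_filter.mpr ⟨Finset.mem_range.mpr hj.2, h.mono (low_mono hj.1)⟩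

theorem linkCount_eq_zero (h : ¬(S.low n).Reachable a b) : S.linkCount n a b = 0 := by
  refine Finset.card_eq_zero.mpr (Finset.filter_eq_empty_iff.mpr fun j hj hab ↦ h ?_)
  exact hab.mono (low_mono (Nat.lt_succ_iff.mp (Finset.mem_range.mp hj)))

theorem linkCount_pos (h : (S.low n).Reachable a b) : 0 < S.linkCount n a b :=
  lt_of_lt_of_le (by omega) (sub_le_linkCount (n := n) h)

theorem two_mul_le_of_unmatched (h : (S.edge 0).Adj a b) :
    2 * n ≤ S.ev a + S.ev b + 2 * S.linkCount n a b := by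
  have hten := S.edgeTen_mod_two 0 a b
  have hlow : (S.low ((S.edgeTen 0 a b + 1) / 2)).Adj a b := ⟨0, h, by omega⟩
  have hcount := sub_le_linkCount (n := n) hlow.reachable
  rw [edgeTen_of_even rfl] at hcount hten
  omega

theorem two_mul_linkCount_of_matched (hS : S.Regular n) (h : (S.edge 1).Adj a b) :
    2 * S.linkCount n a b = 2 * n + 1 - S.ten a := by
  have hcount : S.linkCount n a b = (Finset.Ico ((S.ten a + 1) / 2) (n + 1)).card := by
    refine congrArg Finset.card (Finset.ext fun j ↦ ?_)
    simp only [Finset.mem_filter, Finset.mem_range, Finset.mem_Ico]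
    constructor
    · rintro ⟨hj, hab⟩
      have := (low_reachable_iff_of_matched (hS.apex j (by omega)) h).mp hab
      omega
    · rintro ⟨hle, hj⟩
      exact ⟨hj, (low_reachable_iff_of_matched (hS.apex j (by omega)) h).mpr (by omega)⟩
  have := S.ten_mod_two a
  rw [hcount, Nat.card_Ico]
  omega

theorem slack_of_even (hi : i % 2 = 0) :
    S.slack n i a b = 2 + (S.potential n a + S.potential n b + 4 * S.linkCount n a b) := by
  rw [slack, (Nat.even_iff.mpr hi).neg_one_pow, one_mul]

theorem slack_of_odd (hi : i % 2 = 1) :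
    S.slack n i a b = 2 - (S.potential n a + S.potential n b + 4 * S.linkCount n a b) := by
  rw [slack, (Nat.odd_iff.mpr hi).neg_one_pow, neg_one_mul, sub_eq_add_neg]

theorem od_le_of_not_evenType (hn : 2 * n < S.bound) (h : (S.edge 0).Adj a b)
    (hb : ¬S.EvenType n b) (ha : S.ev a < n) : S.od b ≤ S.ev a + 1 := by
  unfold EvenType at hb
  exact od_le_ev_add_one h (by omega) (by omega)

theorem slack_nonneg (hS : S.Regular n) (h : (S.edge i).Adj a b) : 0 ≤ S.slack n i a b := by
  have hn := hS.lt_bound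
  have hpa := S.ev_mod_two a
  have hpb := S.ev_mod_two b
  rcases Nat.mod_two_eq_zero_or_one i with hi | hi
  · rw [S.edge_of_even hi] at h
    have hcount := two_mul_le_of_unmatched (n := n) h
    rw [slack_of_even hi]
    by_cases ha : S.EvenType n a <;> by_cases hb : S.EvenType n b <;>
      simp only [potential, ha, hb, if_true, if_false]
    · omega
    · have := od_le_of_not_evenType hn h hb
      omega
    · have := od_le_of_not_evenType hn h.symm ha
      omega
    · omega
  · rw [S.edge_of_odd hi] at h
    have hcount := two_mul_linkCount_of_matched hS h
    have hab := ev_eq_of_matched h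
    have hba := ev_eq_of_matched h.symm
    rw [slack_of_odd hi]
    unfold potential EvenType
    unfold ten at *
    split_ifs <;> omega

theorem even_arc_of_reachable (hn : 2 * n < S.bound) (hi : i % 2 = 0) (h : (S.edge i).Adj a b)
    (h0 : S.slack n i a b = 0) (hab : (S.low n).Reachable a b) :
    S.EvenType n a ∧ S.EvenType n b ∧ S.edgeTen i a b < 2 * n + 1 := by
  rw [S.edge_of_even hi] at h
  have hcount := linkCount_pos hab
  have hpa := S.ev_mod_two a
  have hpb := S.ev_mod_two b
  rw [slack_of_even hi] at h0
  rw [edgeTen_of_even hi]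
  by_cases ha : S.EvenType n a <;> by_cases hb : S.EvenType n b <;>
    simp only [potential, ha, hb, if_true, if_false] at h0
  · exact ⟨ha, hb, by omega⟩
  · have := od_le_of_not_evenType hn h hb
    omega
  · have := od_le_of_not_evenType hn h.symm ha
    omega
  · omega

theorem even_arc_of_not_reachable (hi : i % 2 = 0) (h0 : S.slack n i a b = 0)
    (hab : ¬(S.low n).Reachable a b) :
    S.EvenType n a ∧ S.EvenType n b ∧ S.edgeTen i a b = 2 * n + 1 ∨
      S.EvenType n a ∧ ¬S.EvenType n b ∧ S.od b = S.ev a + 1 ∧ S.od b ≤ n ∨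
      ¬S.EvenType n a ∧ S.EvenType n b ∧ S.od a = S.ev b + 1 ∧ S.od a ≤ n := by
  rw [slack_of_even hi, linkCount_eq_zero hab] at h0
  rw [edgeTen_of_even hi]
  by_cases ha : S.EvenType n a <;> by_cases hb : S.EvenType n b <;>
    simp only [potential, ha, hb, if_true, if_false] at h0 <;>
    simp only [ha, hb, true_and, not_true, not_false_iff, false_and, or_false, false_or] <;>
    omega

theorem odd_arc_of_reachable (hS : S.Regular n) (hi : i % 2 = 1) (h : (S.edge i).Adj a b)
    (hab : (S.low n).Reachable a b) :
    S.ten a ≤ 2 * n ∧ S.ten b ≤ 2 * n ∧ S.edgeTen i a b < 2 * n + 1 := by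
  rw [S.edge_of_odd hi] at h
  have ha := (low_reachable_iff_of_matched (hS.apex n le_rfl) h).mp hab
  rw [edgeTen_of_odd hi, ← edgeTen_of_odd (i := 1) rfl, edgeTen_of_matched h]
  exact ⟨ha, ten_eq_of_matched h ▸ ha, Nat.lt_succ_of_le ha⟩

theorem odd_arc_of_not_reachable (hS : S.Regular n) (hi : i % 2 = 1) (h : (S.edge i).Adj a b)
    (h0 : S.slack n i a b = 0) (hab : ¬(S.low n).Reachable a b) :
    2 * n < S.ten a ∧ 2 * n < S.ten b ∧
      (S.EvenType n a ∧ ¬S.EvenType n b ∨ ¬S.EvenType n a ∧ S.EvenType n b ∨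
        ¬S.EvenType n a ∧ ¬S.EvenType n b ∧ S.od a = n ∧ S.od b = n) := by
  rw [S.edge_of_odd hi] at h
  have ha : 2 * n < S.ten a := by
    rwa [low_reachable_iff_of_matched (hS.apex n le_rfl) h, not_le] at hab
  have hmate := ev_eq_of_matched h
  have hmate' := ev_eq_of_matched h.symm
  refine ⟨ha, ten_eq_of_matched h ▸ ha, ?_⟩
  rw [slack_of_odd hi, linkCount_eq_zero hab] at h0
  unfold potential EvenType at h0
  unfold EvenType
  unfold ten at *
  split_ifs at h0 <;> omega

/-! ### Tight paths -/

/-- The signed number of steps of `x` before step `i` inside components of `S.low j`: steps with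
even index count positively, steps with odd index negatively. -/
noncomputable def crossing (S : AltLevels α) (j : ℕ) (x : ℕ → α) (i : ℕ) : ℤ :=
  ∑ k ∈ Finset.range i, (-1) ^ k * if (S.low j).Reachable (x k) (x (k + 1)) then 1 else 0

/-- The path `x` has not met, up to index `i`, the apex of the component of `S.low j` that it is
in at index `i`. -/
def BeforeApex (S : AltLevels α) (j : ℕ) (x : ℕ → α) (i : ℕ) : Prop :=
  ∀ k ≤ i, (S.low j).Reachable (x k) (x i) → S.ten (x k) ≤ 2 * j

/-- The correction term that makes `crossing` antitone. -/
noncomputable def apexDebt (S : AltLevels α) (j : ℕ) (x : ℕ → α) (i : ℕ) : ℤ :=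
  (if S.BeforeApex j x i then 1 else 0) - if i % 2 = 1 ∧ S.ten (x i) ≤ 2 * j then 1 else 0

/-- The corrected crossing number. -/
noncomputable def balance (S : AltLevels α) (j : ℕ) (x : ℕ → α) (i : ℕ) : ℤ :=
  S.crossing j x i + S.apexDebt j x i

theorem BeforeApex.ten_le (h : S.BeforeApex j x i) : S.ten (x i) ≤ 2 * j := h i le_rfl .rfl

theorem not_beforeApex (h : 2 * j < S.ten (x i)) : ¬S.BeforeApex j x i :=
  fun hb ↦ h.not_ge hb.ten_le

theorem beforeApex_succ_iff (hlink : (S.low j).Reachable (x i) (x (i + 1)))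
    (hlow : S.ten (x (i + 1)) ≤ 2 * j) : S.BeforeApex j x (i + 1) ↔ S.BeforeApex j x i := by
  refine ⟨fun h k hk hki ↦ h k (by omega) (hki.trans hlink), fun h k hk hki ↦ ?_⟩
  rcases hk.eq_or_lt with rfl | hk
  · exact hlow
  · exact h k (by omega) (hki.trans hlink.symm)

theorem beforeApex_of_reachable_succ (hj : S.UniqueApex j) (hx : S.IsPath x L) (hi : i < L)
    (hlink : (S.low j).Reachable (x i) (x (i + 1))) (hhigh : 2 * j < S.ten (x (i + 1))) :
    S.BeforeApex j x i := by
  intro k hk hki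
  by_contra! hkhigh
  have := hx.inj (by omega) hi (hj (hki.trans hlink) hkhigh hhigh)
  omega

theorem crossing_succ : S.crossing j x (i + 1) = S.crossing j x i +
    (-1) ^ i * if (S.low j).Reachable (x i) (x (i + 1)) then 1 else 0 :=
  Finset.sum_range_succ _ _

theorem balance_zero (hx : S.IsPath x L) (hj : 2 * j < S.bound) : S.balance j x 0 = 0 := by
  have := not_beforeApex (hj.trans_le (IsPath.bound_le_ten_start hx))
  simp [balance, crossing, apexDebt, this]

theorem balance_succ_le (hj : S.UniqueApex j) (hx : S.IsPath x L) (hi : i < L) :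
    S.balance j x (i + 1) ≤ S.balance j x i := by
  unfold balance
  rw [crossing_succ]
  suffices h : ((-1) ^ i * if (S.low j).Reachable (x i) (x (i + 1)) then 1 else 0) +
      S.apexDebt j x (i + 1) ≤ S.apexDebt j x i by linarith
  have hbefore := beforeApex_succ_iff (S := S) (j := j) (x := x) (i := i)
  unfold apexDebt
  rcases Nat.mod_two_eq_zero_or_one i with hi2 | hi2
  · have hbefore' := beforeApex_of_reachable_succ hj hx hi
    have hlow : S.BeforeApex j x (i + 1) → S.ten (x (i + 1)) ≤ 2 * j := BeforeApex.ten_le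
    rw [(Nat.even_iff.mpr hi2).neg_one_pow]
    by_cases hlink : (S.low j).Reachable (x i) (x (i + 1)) <;>
      by_cases hten : S.ten (x (i + 1)) ≤ 2 * j <;> grind
  · have hadj := hx.adj hi
    rw [S.edge_of_odd hi2] at hadj
    have hlink := low_reachable_iff_of_matched hj hadj
    have hten := ten_eq_of_matched hadj
    have hlow : S.BeforeApex j x (i + 1) → S.ten (x (i + 1)) ≤ 2 * j := BeforeApex.ten_le
    have hlow' : S.BeforeApex j x i → S.ten (x i) ≤ 2 * j := BeforeApex.ten_le
    rw [(Nat.odd_iff.mpr hi2).neg_one_pow]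
    grind

theorem not_beforeApex_of_balance_succ_eq (hi : i % 2 = 0)
    (hlink : ¬(S.low j).Reachable (x i) (x (i + 1))) (h : S.balance j x (i + 1) = S.balance j x i) :
    ¬S.BeforeApex j x i ∧ (S.ten (x (i + 1)) ≤ 2 * j → S.BeforeApex j x (i + 1)) := by
  have hlow : S.BeforeApex j x (i + 1) → S.ten (x (i + 1)) ≤ 2 * j := BeforeApex.ten_le
  unfold balance apexDebt at h
  rw [crossing_succ, if_neg hlink] at h
  grind

theorem balance_antitoneOn (hj : S.UniqueApex j) (hx : S.IsPath x L) :
    AntitoneOn (S.balance j x) (Set.Iic L) :=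
  antitoneOn_of_succ_le Set.ordConnected_Iic fun _ _ _ hi ↦ balance_succ_le hj hx hi

theorem sum_slack (S : AltLevels α) (n : ℕ) (x : ℕ → α) (i : ℕ) :
    ∑ k ∈ Finset.range i, S.slack n k (x k) (x (k + 1)) =
      2 * i + S.potential n (x 0) - (-1) ^ i * S.potential n (x i) +
        4 * ∑ j ∈ Finset.range (n + 1), S.crossing j x i := by
  induction i with
  | zero => simp [crossing]
  | succ i ih =>
    have hcount : (S.linkCount n (x i) (x (i + 1)) : ℤ) =
        ∑ j ∈ Finset.range (n + 1), if (S.low j).Reachable (x i) (x (i + 1)) then 1 else 0 :=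
      Finset.natCast_card_filter _ _
    rw [Finset.sum_range_succ, ih]
    simp only [crossing_succ, Finset.sum_add_distrib,
      ← Finset.mul_sum, ← hcount, slack]
    push_cast
    ring

theorem potential_start (hx : S.IsPath x L) : S.potential n (x 0) = -(2 * n + 1) := by
  have h0 := IsPath.ev_start_eq_zero hx
  rw [potential_of_evenType (Or.inl (by omega)), h0]
  simp

/-- A path of the length that its potential difference allows at best. In the odd case the final
vertex must not lie inside a component of `S.low n`. -/
structure IsTight (S : AltLevels α) (n : ℕ) (x : ℕ → α) (L : ℕ) : Prop where
  path : S.IsPath x L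
  length_eq : 2 * (L : ℤ) = 2 * n + 1 + (-1) ^ L * S.potential n (x L)
  ten_of_odd : L % 2 = 1 → 2 * n < S.ten (x L)

namespace IsTight

theorem sum_slack (hx : S.IsTight n x L) :
    ∑ k ∈ Finset.range L, S.slack n k (x k) (x (k + 1)) =
      4 * ∑ j ∈ Finset.range (n + 1), S.crossing j x L := by
  have := hx.length_eq
  rw [AltLevels.sum_slack, potential_start hx.path]
  linarith

theorem apexDebt_nonneg (hx : S.IsTight n x L) (hj : j ≤ n) : 0 ≤ S.apexDebt j x L := by
  have := hx.ten_of_odd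
  unfold apexDebt
  rw [if_neg (c := _ ∧ _) (by omega)]
  split_ifs <;> simp

theorem crossing_le (hS : S.Regular n) (hx : S.IsTight n x L) (hj : j ≤ n) :
    S.crossing j x L ≤ -S.apexDebt j x L := by
  have hn := hS.lt_bound
  have hanti := balance_antitoneOn (hS.apex j hj) hx.path (Nat.zero_le L) Set.self_mem_Iic
    (Nat.zero_le L)
  rw [balance_zero hx.path (by omega), balance] at hanti
  linarith

theorem slack_nonneg (hS : S.Regular n) (hx : S.IsTight n x L) (hi : i ∈ Finset.range L) :
    0 ≤ S.slack n i (x i) (x (i + 1)) :=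
  AltLevels.slack_nonneg hS (hx.path.adj (Finset.mem_range.mp hi))

theorem sum_crossing (hS : S.Regular n) (hx : S.IsTight n x L) :
    ∑ j ∈ Finset.range (n + 1), S.crossing j x L = 0 := by
  refine le_antisymm (Finset.sum_nonpos fun j hj ↦ ?_) ?_
  · rw [Finset.mem_range, Nat.lt_succ_iff] at hj
    have := crossing_le hS hx hj
    have := hx.apexDebt_nonneg hj
    omega
  · have := hx.sum_slack ▸ Finset.sum_nonneg fun i hi ↦ slack_nonneg hS hx hi
    omega

theorem slack_eq_zero (hS : S.Regular n) (hx : S.IsTight n x L) (hi : i < L) :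
    S.slack n i (x i) (x (i + 1)) = 0 := by
  have hsum := hx.sum_slack
  rw [sum_crossing hS hx, mul_zero,
    Finset.sum_eq_zero_iff_of_nonneg fun i hi ↦ slack_nonneg hS hx hi] at hsum
  exact hsum i (Finset.mem_range.mpr hi)

theorem crossing_eq_zero (hS : S.Regular n) (hx : S.IsTight n x L) (hj : j ≤ n) :
    S.crossing j x L = 0 := by
  refine (Finset.sum_eq_zero_iff_of_nonpos fun j hj ↦ ?_).mp (sum_crossing hS hx) j
    (Finset.mem_range.mpr (Nat.lt_succ_of_le hj))
  rw [Finset.mem_range, Nat.lt_succ_iff] at hj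
  have := crossing_le hS hx hj
  have := hx.apexDebt_nonneg hj
  omega

theorem apexDebt_eq_zero (hS : S.Regular n) (hx : S.IsTight n x L) (hj : j ≤ n) :
    S.apexDebt j x L = 0 := by
  have := crossing_le hS hx hj
  have := hx.apexDebt_nonneg hj
  have := crossing_eq_zero hS hx hj
  omega

theorem balance_eq_zero (hS : S.Regular n) (hx : S.IsTight n x L) (hj : j ≤ n) (hi : i ≤ L) :
    S.balance j x i = 0 := by
  have hn := hS.lt_bound
  have hanti := balance_antitoneOn (hS.apex j hj) hx.path
  have hle := hanti (Nat.zero_le L) hi (Nat.zero_le i)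
  have hge := hanti hi Set.self_mem_Iic hi
  rw [balance_zero hx.path (by omega)] at hle
  rw [balance, crossing_eq_zero hS hx hj, apexDebt_eq_zero hS hx hj] at hge
  omega

theorem not_beforeApex (hS : S.Regular n) (hx : S.IsTight n x L) : ¬S.BeforeApex n x L := by
  intro h
  have hdebt := apexDebt_eq_zero hS hx le_rfl
  have hodd := fun hL ↦ (hx.ten_of_odd hL).not_ge h.ten_le
  rw [apexDebt, if_pos h, if_neg fun hL ↦ hodd hL.1] at hdebt
  omega

/-- A tight path leaves and enters components by even steps only through their apexes. -/
theorem not_beforeApex_of_not_reachable (hS : S.Regular n) (hx : S.IsTight n x L) (hi : i < L)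
    (hi2 : i % 2 = 0) (hlink : ¬(S.low n).Reachable (x i) (x (i + 1))) :
    ¬S.BeforeApex n x i ∧ (S.ten (x (i + 1)) ≤ 2 * n → S.BeforeApex n x (i + 1)) :=
  not_beforeApex_of_balance_succ_eq hi2 hlink <| by
    rw [balance_eq_zero hS hx le_rfl hi, balance_eq_zero hS hx le_rfl hi.le]

theorem take (hS : S.Regular n) (hx : S.IsTight n x L) (hi : i ≤ L) (hhigh : 2 * n < S.ten (x i)) :
    S.IsTight n x i where
  path := hx.path.take hi
  length_eq := by
    have hcross : ∑ j ∈ Finset.range (n + 1), S.crossing j x i = 0 := by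
      refine Finset.sum_eq_zero fun j hj ↦ ?_
      rw [Finset.mem_range, Nat.lt_succ_iff] at hj
      have hbal := balance_eq_zero hS hx hj hi
      rwa [balance, apexDebt, if_neg (AltLevels.not_beforeApex (by omega)), if_neg (by omega),
        sub_zero, add_zero] at hbal
    have hsum := AltLevels.sum_slack S n x i
    rw [hcross, potential_start hx.path, Finset.sum_eq_zero fun k hk ↦
      slack_eq_zero hS hx ((Finset.mem_range.mp hk).trans_le hi)] at hsum
    linarith
  ten_of_odd _ := hhigh

end IsTight

/-! ### The turn of a tight path -/

/-- The path `x` is at index `i` in its second, descending half: its position is not described by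
the relevant level of `x i`, or, inside a component of `S.low n`, the apex is still to come. -/
def Turned (S : AltLevels α) (n : ℕ) (x : ℕ → α) (i : ℕ) : Prop :=
  (S.ten (x i) ≤ 2 * n → S.BeforeApex n x i) ∧
    (2 * n < S.ten (x i) → (S.EvenType n (x i) ↔ i % 2 = 1))

theorem turned_iff_of_high (h : 2 * n < S.ten (x i)) :
    S.Turned n x i ↔ (S.EvenType n (x i) ↔ i % 2 = 1) :=
  ⟨fun ht ↦ ht.2 h, fun ht ↦ ⟨fun hlow ↦ absurd h hlow.not_gt, fun _ ↦ ht⟩⟩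

theorem turned_iff_of_low (h : S.ten (x i) ≤ 2 * n) : S.Turned n x i ↔ S.BeforeApex n x i :=
  ⟨fun ht ↦ ht.1 h, fun ht ↦ ⟨fun _ ↦ ht, fun hhigh ↦ absurd hhigh h.not_gt⟩⟩

theorem not_turned_zero (hn : 2 * n < S.bound) (hx : S.IsPath x L) : ¬S.Turned n x 0 := by
  have h0 := IsPath.ev_start_eq_zero hx
  have hE : S.EvenType n (x 0) := Or.inl (by omega)
  simp [turned_iff_of_high (hn.trans_le (IsPath.bound_le_ten_start hx)), hE]

/-- The step `m` at which the path turns. -/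
def IsSwitch (S : AltLevels α) (n : ℕ) (x : ℕ → α) (m : ℕ) : Prop :=
  ¬S.Turned n x m ∧ S.Turned n x (m + 1)

namespace IsTight

theorem turned_left_iff (hS : S.Regular n) (hx : S.IsTight n x L) (hi : i < L)
    (hlink : ¬(S.low n).Reachable (x i) (x (i + 1))) :
    S.Turned n x i ↔ (S.EvenType n (x i) ↔ i % 2 = 1) := by
  rcases le_or_gt (S.ten (x i)) (2 * n) with hlow | hhigh
  · rcases Nat.mod_two_eq_zero_or_one i with hi2 | hi2
    · have := (hx.not_beforeApex_of_not_reachable hS hi hi2 hlink).1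
      simp [turned_iff_of_low hlow, this, evenType_of_ten_le hlow, hi2]
    · have := (odd_arc_of_not_reachable hS hi2 (hx.path.adj hi) (hx.slack_eq_zero hS hi) hlink).1
      omega
  · exact turned_iff_of_high hhigh

theorem turned_right_iff (hS : S.Regular n) (hx : S.IsTight n x L) (hi : i < L)
    (hlink : ¬(S.low n).Reachable (x i) (x (i + 1))) :
    S.Turned n x (i + 1) ↔ (S.EvenType n (x (i + 1)) ↔ (i + 1) % 2 = 1) := by
  rcases le_or_gt (S.ten (x (i + 1))) (2 * n) with hlow | hhigh
  · rcases Nat.mod_two_eq_zero_or_one i with hi2 | hi2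
    · have := (hx.not_beforeApex_of_not_reachable hS hi hi2 hlink).2 hlow
      simp only [turned_iff_of_low hlow, this, evenType_of_ten_le hlow, true_iff]
      omega
    · have := (odd_arc_of_not_reachable hS hi2 (hx.path.adj hi) (hx.slack_eq_zero hS hi) hlink).2.1
      omega
  · exact turned_iff_of_high hhigh

theorem turned_succ_iff_of_reachable (hS : S.Regular n) (hx : S.IsTight n x L) (hi : i < L)
    (hlink : (S.low n).Reachable (x i) (x (i + 1))) :
    S.Turned n x (i + 1) ↔ S.Turned n x i := by
  have hadj := hx.path.adj hi
  rcases Nat.mod_two_eq_zero_or_one i with hi2 | hi2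
  · obtain ⟨hE, hE', -⟩ :=
      even_arc_of_reachable hS.lt_bound hi2 hadj (hx.slack_eq_zero hS hi) hlink
    rcases le_or_gt (S.ten (x i)) (2 * n) with hlow | hhigh <;>
      rcases le_or_gt (S.ten (x (i + 1))) (2 * n) with hlow' | hhigh'
    · rw [turned_iff_of_low hlow, turned_iff_of_low hlow', beforeApex_succ_iff hlink hlow']
    · have := beforeApex_of_reachable_succ (hS.apex n le_rfl) hx.path hi hlink hhigh'
      simp only [turned_iff_of_low hlow, turned_iff_of_high hhigh', this, hE', true_iff, iff_true]
      omega
    · simp [turned_iff_of_low hlow', turned_iff_of_high hhigh, beforeApex_succ_iff hlink hlow',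
        AltLevels.not_beforeApex hhigh, hE, hi2]
    · exact absurd (hS.apex n le_rfl hlink hhigh hhigh') hadj.ne
  · obtain ⟨hlow, hlow', -⟩ := odd_arc_of_reachable hS hi2 hadj hlink
    rw [turned_iff_of_low hlow, turned_iff_of_low hlow', beforeApex_succ_iff hlink hlow']

theorem turned_succ (hS : S.Regular n) (hx : S.IsTight n x L) (hi : i < L)
    (ht : S.Turned n x i) : S.Turned n x (i + 1) := by
  have h0 := hx.slack_eq_zero hS hi
  by_cases hlink : (S.low n).Reachable (x i) (x (i + 1))
  · exact (hx.turned_succ_iff_of_reachable hS hi hlink).mpr ht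
  rw [hx.turned_left_iff hS hi hlink] at ht
  rw [hx.turned_right_iff hS hi hlink]
  rcases Nat.mod_two_eq_zero_or_one i with hi2 | hi2
  · have := even_arc_of_not_reachable hi2 h0 hlink
    grind
  · have := odd_arc_of_not_reachable hS hi2 (hx.path.adj hi) h0 hlink
    grind

theorem turned_mono (hS : S.Regular n) (hx : S.IsTight n x L) (hij : i ≤ j) (hj : j ≤ L)
    (ht : S.Turned n x i) : S.Turned n x j := by
  induction j, hij using Nat.le_induction with
  | base => exact ht
  | succ j _ ih => exact hx.turned_succ hS hj (ih (by omega))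

theorem exists_isSwitch (hS : S.Regular n) (hx : S.IsTight n x L) (ht : S.Turned n x L) :
    ∃ m < L, S.IsSwitch n x m := by
  have h0 := not_turned_zero hS.lt_bound hx.path
  obtain ⟨m, hm, hm'⟩ := Nat.exists_not_and_succ_of_not_zero_of_exists
    (p := fun i ↦ S.Turned n x (min i L)) (by simpa using h0) ⟨L, by simpa using ht⟩
  have hmL : m < L := by
    by_contra! hle
    rw [min_eq_right hle] at hm
    exact hm ht
  rw [min_eq_left hmL.le] at hm
  rw [min_eq_left hmL] at hm'
  exact ⟨m, hmL, hm, hm'⟩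

theorem isSwitch_unique (hS : S.Regular n) (hx : S.IsTight n x L) (hi : i < L) (hj : j < L)
    (hsi : S.IsSwitch n x i) (hsj : S.IsSwitch n x j) : i = j := by
  by_contra hne
  rcases lt_or_gt_of_ne hne with hij | hji
  · exact hsj.1 (hx.turned_mono hS hij hj.le hsi.2)
  · exact hsi.1 (hx.turned_mono hS hji hi.le hsj.2)

theorem not_reachable_of_isSwitch (hS : S.Regular n) (hx : S.IsTight n x L) (hm : m < L)
    (hs : S.IsSwitch n x m) : ¬(S.low n).Reachable (x m) (x (m + 1)) :=
  fun hlink ↦ hs.1 ((hx.turned_succ_iff_of_reachable hS hm hlink).mp hs.2)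

theorem evenType_iff_of_isSwitch (hS : S.Regular n) (hx : S.IsTight n x L) (hm : m < L)
    (hs : S.IsSwitch n x m) :
    (S.EvenType n (x m) ↔ m % 2 = 0) ∧ (S.EvenType n (x (m + 1)) ↔ m % 2 = 0) := by
  have hlink := hx.not_reachable_of_isSwitch hS hm hs
  obtain ⟨hl, hr⟩ := hs
  rw [hx.turned_left_iff hS hm hlink] at hl
  rw [hx.turned_right_iff hS hm hlink] at hr
  constructor
  · have := Nat.mod_two_eq_zero_or_one m
    grind
  · rw [hr]
    omega

theorem odd_arc_of_isSwitch (hS : S.Regular n) (hx : S.IsTight n x L) (hm : m < L)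
    (hs : S.IsSwitch n x m) (hm2 : m % 2 = 1) : S.od (x m) = n ∧ S.od (x (m + 1)) = n := by
  have harc := odd_arc_of_not_reachable hS hm2 (hx.path.adj hm) (hx.slack_eq_zero hS hm)
    (hx.not_reachable_of_isSwitch hS hm hs)
  have htype := hx.evenType_iff_of_isSwitch hS hm hs
  grind

theorem edgeTen_of_isSwitch (hS : S.Regular n) (hx : S.IsTight n x L) (hm : m < L)
    (hs : S.IsSwitch n x m) : S.edgeTen m (x m) (x (m + 1)) = 2 * n + 1 := by
  rcases Nat.mod_two_eq_zero_or_one m with hm2 | hm2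
  · have harc := even_arc_of_not_reachable hm2 (hx.slack_eq_zero hS hm)
      (hx.not_reachable_of_isSwitch hS hm hs)
    have htype := hx.evenType_iff_of_isSwitch hS hm hs
    grind
  · obtain ⟨hod, hod'⟩ := hx.odd_arc_of_isSwitch hS hm hs hm2
    rw [edgeTen_of_odd hm2]
    omega

theorem isSwitch_of_evenType_iff (hS : S.Regular n) (hx : S.IsTight n x L) (hi : i < L)
    (hlink : ¬(S.low n).Reachable (x i) (x (i + 1)))
    (htype : S.EvenType n (x i) ↔ S.EvenType n (x (i + 1))) : S.IsSwitch n x i := by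
  have h0 := hx.slack_eq_zero hS hi
  rw [IsSwitch, hx.turned_left_iff hS hi hlink, hx.turned_right_iff hS hi hlink]
  rcases Nat.mod_two_eq_zero_or_one i with hi2 | hi2
  · have := even_arc_of_not_reachable hi2 h0 hlink
    grind
  · have := odd_arc_of_not_reachable hS hi2 (hx.path.adj hi) h0 hlink
    grind

end IsTight

/-- The level of `a` along the ascending halves of paths of tenacity `2 * n + 1`. -/
noncomputable def lvl (S : AltLevels α) (n : ℕ) (a : α) : ℕ :=
  if S.EvenType n a then S.ev a else S.od a

/-- The relevant level `S.lvl n a` is short enough for `a` to lie on such a half. -/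
def Reached (S : AltLevels α) (n : ℕ) (a : α) : Prop := S.EvenType n a ∨ S.od a ≤ n

/-- A shortest path to a reached vertex. -/
structure IsShort (S : AltLevels α) (n : ℕ) (x : ℕ → α) (L : ℕ) : Prop where
  path : S.IsPath x L
  reached : S.Reached n (x L)
  length_eq : L = S.lvl n (x L)

theorem lvl_of_evenType (h : S.EvenType n a) : S.lvl n a = S.ev a := if_pos h

theorem lvl_of_not_evenType (h : ¬S.EvenType n a) : S.lvl n a = S.od a := if_neg h

theorem lvl_mod_two_eq_zero_iff : S.lvl n a % 2 = 0 ↔ S.EvenType n a := by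
  have := S.ev_mod_two a
  have := S.od_mod_two a
  unfold lvl
  split_ifs with h <;> simp only [h, iff_true, iff_false] <;> omega

theorem level_lvl (S : AltLevels α) (n : ℕ) (a : α) : S.level (S.lvl n a) a = S.lvl n a := by
  by_cases h : S.EvenType n a
  · rw [S.level_of_even (lvl_mod_two_eq_zero_iff.mpr h), lvl_of_evenType h]
  · rw [S.level_of_odd (by have := lvl_mod_two_eq_zero_iff.not.mpr h; omega),
      lvl_of_not_evenType h]

theorem exists_isShort (hn : 2 * n < S.bound) (h : S.Reached n a) :
    ∃ x L, S.IsShort n x L ∧ x L = a := by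
  have hle : S.lvl n a ≤ S.bound := by
    unfold Reached EvenType ten at h
    unfold lvl EvenType ten
    split_ifs <;> omega
  rw [← S.level_lvl] at hle
  obtain ⟨x, hx, hxa⟩ := S.exists_altSeq hle
  rw [S.level_lvl] at hx hxa
  exact ⟨x, S.lvl n a, ⟨hx, hxa.symm ▸ h, by rw [hxa]⟩, hxa⟩

theorem IsPath.lvl_le (hx : S.IsPath x L) (hi : i ≤ L) (hE : S.EvenType n (x i) ↔ i % 2 = 0) :
    S.lvl n (x i) ≤ i := by
  rcases Nat.mod_two_eq_zero_or_one i with hi2 | hi2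
  · rw [lvl_of_evenType (hE.mpr hi2)]
    exact hx.ev_le hi hi2
  · rw [lvl_of_not_evenType (by simp [hE, hi2])]
    exact hx.od_le hi hi2

namespace IsShort

theorem evenType_iff (hx : S.IsShort n x L) : S.EvenType n (x L) ↔ L % 2 = 0 := by
  rw [← lvl_mod_two_eq_zero_iff, ← hx.length_eq]

theorem length_unique (hx : S.IsShort n x L) (hy : S.IsShort n y c) (h : x L = y c) : L = c := by
  rw [hx.length_eq, hy.length_eq, h]

theorem isTight (hx : S.IsShort n x L) : S.IsTight n x L where
  path := hx.path
  length_eq := by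
    have hlen := hx.length_eq
    have hE := hx.evenType_iff
    rcases Nat.mod_two_eq_zero_or_one L with hL | hL
    · rw [lvl_of_evenType (hE.mpr hL)] at hlen
      rw [(Nat.even_iff.mpr hL).neg_one_pow, potential_of_evenType (hE.mpr hL)]
      omega
    · have hE : ¬S.EvenType n (x L) := by simp [hE, hL]
      have := hx.reached.resolve_left hE
      rw [lvl_of_not_evenType hE] at hlen
      rw [(Nat.odd_iff.mpr hL).neg_one_pow, potential_of_not_evenType hE]
      omega
  ten_of_odd hL := by
    by_contra! hlow
    have := hx.evenType_iff.mp (evenType_of_ten_le hlow)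
    omega

theorem not_turned (hS : S.Regular n) (hx : S.IsShort n x L) (hi : i ≤ L) :
    ¬S.Turned n x i := by
  refine fun ht ↦ ?_
  have htL := hx.isTight.turned_mono hS hi le_rfl ht
  rcases le_or_gt (S.ten (x L)) (2 * n) with hlow | hhigh
  · exact hx.isTight.not_beforeApex hS ((turned_iff_of_low hlow).mp htL)
  · rw [turned_iff_of_high hhigh, hx.evenType_iff] at htL
    omega

theorem take (hS : S.Regular n) (hx : S.IsShort n x L) (hi : i ≤ L) (hhigh : 2 * n < S.ten (x i)) :
    S.IsShort n x i := by
  have hlen := (hx.isTight.take hS hi hhigh).length_eq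
  have hnt := hx.not_turned hS hi
  rw [turned_iff_of_high hhigh] at hnt
  rcases Nat.mod_two_eq_zero_or_one i with hi2 | hi2
  · have hE : S.EvenType n (x i) := by simpa [hi2] using hnt
    rw [(Nat.even_iff.mpr hi2).neg_one_pow, potential_of_evenType hE] at hlen
    exact ⟨hx.path.take hi, Or.inl hE, by rw [lvl_of_evenType hE]; omega⟩
  · have hE : ¬S.EvenType n (x i) := by simpa [hi2] using hnt
    rw [(Nat.odd_iff.mpr hi2).neg_one_pow, potential_of_not_evenType hE] at hlen
    have hod := hx.path.od_le hi hi2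
    exact ⟨hx.path.take hi, Or.inr (by omega), by rw [lvl_of_not_evenType hE]; omega⟩

theorem reachable_succ (hS : S.Regular n) (hx : S.IsShort n x L) (hi : i < L)
    (hlow : S.ten (x (i + 1)) ≤ 2 * n) : (S.low n).Reachable (x i) (x (i + 1)) := by
  have hadj := hx.path.adj hi
  rcases Nat.mod_two_eq_zero_or_one i with hi2 | hi2
  · by_contra hlink
    have hbefore := (hx.isTight.not_beforeApex_of_not_reachable hS hi hi2 hlink).2 hlow
    exact hx.not_turned hS hi ((turned_iff_of_low hlow).mpr hbefore)
  · rw [S.edge_of_odd hi2] at hadj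
    exact (low_reachable_iff_of_matched (hS.apex n le_rfl) hadj).mpr
      (ten_eq_of_matched hadj ▸ hlow)

theorem exists_apex (hS : S.Regular n) (hx : S.IsShort n x L) (hi : i ≤ L) :
    ∃ k ≤ i, 2 * n < S.ten (x k) ∧ (S.low n).Reachable (x k) (x i) ∧
      ∀ j ≤ i, 2 * n < S.ten (x j) → j ≤ k := by
  induction i with
  | zero =>
    exact ⟨0, le_rfl, hS.lt_bound.trans_le (IsPath.bound_le_ten_start hx.path), .rfl, fun _ h _ ↦ h⟩
  | succ i ih =>
    rcases lt_or_ge (2 * n) (S.ten (x (i + 1))) with hhigh | hlow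
    · exact ⟨i + 1, le_rfl, hhigh, .rfl, fun _ h _ ↦ h⟩
    · obtain ⟨k, hki, hk, hlink, hmax⟩ := ih (by omega)
      refine ⟨k, by omega, hk, hlink.trans (hx.reachable_succ hS hi hlow), fun j hj hjhigh ↦ ?_⟩
      rcases hj.eq_or_lt with rfl | hj
      · exact absurd hjhigh hlow.not_gt
      · exact hmax j (by omega) hjhigh

/-- A short path enters a component only through its apex, whose index is its relevant level. -/
theorem exists_common_apex (hS : S.Regular n) (hx : S.IsShort n x l) (hy : S.IsShort n y c)
    (hi : i ≤ l) (hj : j ≤ c) (hlink : (S.low n).Reachable (x i) (y j)) :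
    ∃ k ≤ i, k ≤ j ∧ x k = y k ∧ 2 * n < S.ten (x k) ∧ (∀ m ≤ i, 2 * n < S.ten (x m) → m ≤ k) ∧
      ∀ m ≤ j, 2 * n < S.ten (y m) → m ≤ k := by
  obtain ⟨k, hki, hk, hxlink, hkmax⟩ := hx.exists_apex hS hi
  obtain ⟨k', hlj, hl, hylink, hlmax⟩ := hy.exists_apex hS hj
  have heq : x k = y k' := hS.apex n le_rfl (hxlink.trans (hlink.trans hylink.symm)) hk hl
  obtain rfl : k = k' :=
    (hx.take hS (hki.trans hi) hk).length_unique (hy.take hS (hlj.trans hj) hl) heq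
  exact ⟨k, hki, hlj, heq, hk, hkmax, hlmax⟩

end IsShort

namespace IsTight

theorem lvl_add_of_turned (hS : S.Regular n) (hx : S.IsTight n x L) (hi : i ≤ L)
    (ht : S.Turned n x i) (hhigh : 2 * n < S.ten (x i)) :
    S.lvl n (x i) + i = 2 * n + 1 ∧ S.ten (x i) = 2 * n + 1 := by
  have hlen := (hx.take hS hi hhigh).length_eq
  rw [turned_iff_of_high hhigh] at ht
  unfold ten at *
  rcases Nat.mod_two_eq_zero_or_one i with hi2 | hi2
  · have hE : ¬S.EvenType n (x i) := by simp [ht, hi2]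
    rw [(Nat.even_iff.mpr hi2).neg_one_pow, potential_of_not_evenType hE] at hlen
    have hev := hx.path.ev_le hi hi2
    rw [lvl_of_not_evenType hE]
    omega
  · have hE : S.EvenType n (x i) := ht.mpr hi2
    rw [(Nat.odd_iff.mpr hi2).neg_one_pow, potential_of_evenType hE] at hlen
    have hod := hx.path.od_le hi hi2
    rw [lvl_of_evenType hE]
    omega

theorem reachable_succ_of_turned (hS : S.Regular n) (hx : S.IsTight n x L) (hi : i < L)
    (ht : S.Turned n x i) (hlow : S.ten (x i) ≤ 2 * n) :
    (S.low n).Reachable (x i) (x (i + 1)) := by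
  have hadj := hx.path.adj hi
  rcases Nat.mod_two_eq_zero_or_one i with hi2 | hi2
  · by_contra hlink
    exact (hx.not_beforeApex_of_not_reachable hS hi hi2 hlink).1 ((turned_iff_of_low hlow).mp ht)
  · rw [S.edge_of_odd hi2] at hadj
    exact (low_reachable_iff_of_matched (hS.apex n le_rfl) hadj).mpr hlow

theorem exists_apex_of_turned (hS : S.Regular n) (hx : S.IsTight n x L)
    (hL : 2 * n < S.ten (x L)) (hi : i ≤ L) (ht : S.Turned n x i) :
    ∃ k, i ≤ k ∧ k ≤ L ∧ 2 * n < S.ten (x k) ∧ (S.low n).Reachable (x i) (x k) := by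
  induction hi using Nat.decreasingInduction with
  | self => exact ⟨L, le_rfl, le_rfl, hL, .rfl⟩
  | of_succ i hi ih =>
    rcases lt_or_ge (2 * n) (S.ten (x i)) with hhigh | hlow
    · exact ⟨i, le_rfl, hi.le, hhigh, .rfl⟩
    · obtain ⟨k, hik, hkL, hk, hlink⟩ := ih (hx.turned_succ hS hi ht)
      exact ⟨k, by omega, hkL, hk, (hx.reachable_succ_of_turned hS hi ht hlow).trans hlink⟩

theorem lvl_add_lvl_of_isSwitch (hS : S.Regular n) (hx : S.IsTight n x L) (hm : m < L)
    (hs : S.IsSwitch n x m) : S.lvl n (x m) + S.lvl n (x (m + 1)) = 2 * n := by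
  have hten := hx.edgeTen_of_isSwitch hS hm hs
  obtain ⟨hE, hE'⟩ := hx.evenType_iff_of_isSwitch hS hm hs
  rcases Nat.mod_two_eq_zero_or_one m with hm2 | hm2
  · rw [edgeTen_of_even hm2] at hten
    rw [lvl_of_evenType (hE.mpr hm2), lvl_of_evenType (hE'.mpr hm2)]
    omega
  · rw [edgeTen_of_odd hm2] at hten
    rw [lvl_of_not_evenType (by simp [hE, hm2]), lvl_of_not_evenType (by simp [hE', hm2])]
    omega

theorem reached_of_isSwitch (hS : S.Regular n) (hx : S.IsTight n x L) (hm : m < L)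
    (hs : S.IsSwitch n x m) : S.Reached n (x m) ∧ S.Reached n (x (m + 1)) := by
  obtain ⟨hE, hE'⟩ := hx.evenType_iff_of_isSwitch hS hm hs
  rcases Nat.mod_two_eq_zero_or_one m with hm2 | hm2
  · exact ⟨Or.inl (hE.mpr hm2), Or.inl (hE'.mpr hm2)⟩
  · obtain ⟨hod, hod'⟩ := hx.odd_arc_of_isSwitch hS hm hs hm2
    exact ⟨Or.inr hod.le, Or.inr hod'.le⟩

end IsTight

theorem IsPath.isTight_of_eq_max (hx : S.IsPath x L) (hten : S.ten (x L) = 2 * n + 1)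
    (hL : L = max (S.ev (x L)) (S.od (x L))) : S.IsTight n x L where
  path := hx
  length_eq := by
    have hev := S.ev_mod_two (x L)
    have hod := S.od_mod_two (x L)
    unfold potential EvenType
    rcases Nat.mod_two_eq_zero_or_one L with hL2 | hL2
    · rw [(Nat.even_iff.mpr hL2).neg_one_pow]
      unfold ten at *
      split_ifs <;> omega
    · rw [(Nat.odd_iff.mpr hL2).neg_one_pow]
      unfold ten at *
      split_ifs <;> omega
  ten_of_odd _ := by omega

theorem turned_of_eq_max (hten : S.ten (x L) = 2 * n + 1)
    (hL : L = max (S.ev (x L)) (S.od (x L))) : S.Turned n x L := by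
  have hev := S.ev_mod_two (x L)
  have hod := S.od_mod_two (x L)
  rw [turned_iff_of_high (by omega), EvenType]
  unfold ten at *
  omega

theorem exists_turned_path (hn : 2 * n < S.bound) (ha : S.ten a = 2 * n + 1) :
    ∃ x L, S.IsTight n x L ∧ S.Turned n x L ∧ x L = a := by
  suffices h : ∃ x L, S.IsPath x L ∧ x L = a ∧ L = max (S.ev a) (S.od a) by
    obtain ⟨x, L, hx, rfl, hL⟩ := h
    exact ⟨x, L, IsPath.isTight_of_eq_max hx ha hL, turned_of_eq_max ha hL, rfl⟩
  unfold ten at ha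
  rcases le_total (S.ev a) (S.od a) with h | h
  · obtain ⟨x, hx, hxa⟩ := exists_path_od (S := S) (a := a) (by omega)
    exact ⟨x, _, hx, hxa, (max_eq_right h).symm⟩
  · obtain ⟨x, hx, hxa⟩ := exists_path_ev (S := S) (a := a) (by omega)
    exact ⟨x, _, hx, hxa, (max_eq_left h).symm⟩

/-! ### Uniqueness of apexes -/

/-- The last vertex of tenacity more than `2 * n + 1` on the path `x` is at index `β`. -/
structure LastHigh (S : AltLevels α) (n : ℕ) (x : ℕ → α) (L β : ℕ) : Prop where
  le : β ≤ L
  lt_ten : 2 * n + 1 < S.ten (x β)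
  ten_le : ∀ {i}, β < i → i ≤ L → S.ten (x i) ≤ 2 * n + 1

/-- `b` is the last vertex of tenacity more than `2 * n + 1` on some short path to `a`. It will be
the apex of the component of `a` in `S.low (n + 1)`. -/
def HasBase (S : AltLevels α) (n : ℕ) (a b : α) : Prop :=
  ∃ x L β, S.IsShort n x L ∧ x L = a ∧ S.LastHigh n x L β ∧ x β = b

/-- All short paths to `u` and to `v` have the same base. -/
def SameBase (S : AltLevels α) (n : ℕ) (u v : α) : Prop :=
  ∀ ⦃b d⦄, S.HasBase n u b → S.HasBase n v d → b = d

theorem IsPath.exists_lastHigh (hn : 2 * n + 1 < S.bound) (hx : S.IsPath x L) :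
    ∃ β, S.LastHigh n x L β := by
  have h0 := hn.trans_le (IsPath.bound_le_ten_start hx)
  let P (i : ℕ) : Prop := 2 * n + 1 < S.ten (x i)
  exact ⟨Nat.findGreatest P L, Nat.findGreatest_le L,
    Nat.findGreatest_spec (P := P) (Nat.zero_le L) h0,
    fun hi hiL ↦ not_lt.mp (Nat.findGreatest_is_greatest (P := P) hi hiL)⟩

namespace LastHigh

theorem take (hβ : S.LastHigh n x L β) (hle : β ≤ i) (hi : i ≤ L) : S.LastHigh n x i β :=
  ⟨hle, hβ.lt_ten, fun hj hji ↦ hβ.ten_le hj (hji.trans hi)⟩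

theorem eq_of_lt_ten (hβ : S.LastHigh n x L β) (hle : β ≤ k) (hk : k ≤ L)
    (hhigh : 2 * n + 1 < S.ten (x k)) : β = k := by
  by_contra hne
  exact (hβ.ten_le (by omega) hk).not_gt hhigh

theorem hasBase (hβ : S.LastHigh n x L β) (hx : S.IsShort n x L) : S.HasBase n (x L) (x β) :=
  ⟨x, L, β, hx, rfl, hβ, rfl⟩

theorem splice (hβ : S.LastHigh n y c β) (hc : c ≤ L)
    (hx : ∀ i, c < i → i ≤ L → S.ten (x i) ≤ 2 * n + 1) :
    S.LastHigh n (MV.splice y c x) L β := by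
  refine ⟨hβ.le.trans hc, ?_, fun {i} hi hiL ↦ ?_⟩
  · rw [splice_of_le hβ.le]
    exact hβ.lt_ten
  · rcases le_or_gt i c with hic | hic
    · rw [splice_of_le hic]
      exact hβ.ten_le hi hic
    · rw [splice_of_lt hic]
      exact hx i hic hiL

end LastHigh

theorem exists_hasBase (hn : 2 * n + 1 < S.bound) (ha : S.Reached n a) :
    ∃ b, S.HasBase n a b := by
  obtain ⟨x, L, hx, rfl⟩ := exists_isShort (by omega) ha
  obtain ⟨β, hβ⟩ := IsPath.exists_lastHigh hn hx.path
  exact ⟨x β, hβ.hasBase hx⟩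

theorem hasBase_self (hn : 2 * n < S.bound) (ha : S.Reached n a)
    (hten : 2 * n + 1 < S.ten a) : S.HasBase n a a := by
  obtain ⟨x, L, hx, rfl⟩ := exists_isShort hn ha
  exact ⟨x, L, L, hx, rfl, ⟨le_rfl, hten, fun h h' ↦ absurd h h'.not_gt⟩, rfl⟩

theorem SameBase.symm (h : S.SameBase n u v) : S.SameBase n v u :=
  fun _ _ hb hd ↦ (h hd hb).symm

namespace IsShort

theorem base_eq_of_eq (hS : S.Regular n) (hx : S.IsShort n x L) (hy : S.IsShort n y c)
    (hβ : S.LastHigh n x L β) (hγ : S.LastHigh n y c γ) (hβk : β ≤ k) (hγk : γ ≤ k) (hkL : k ≤ L)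
    (hkc : k ≤ c) (heq : x k = y k) (hhigh : 2 * n < S.ten (x k))
    (hself : S.ten (x k) = 2 * n + 1 → S.SameBase n (x k) (x k)) : x β = y γ := by
  by_cases hten : S.ten (x k) = 2 * n + 1
  · refine hself hten ((hβ.take hβk hkL).hasBase (hx.take hS hkL hhigh)) ?_
    exact heq ▸ (hγ.take hγk hkc).hasBase (hy.take hS hkc (heq ▸ hhigh))
  · rw [hβ.eq_of_lt_ten hβk hkL (by omega), hγ.eq_of_lt_ten hγk hkc (by rw [← heq]; omega), heq]

/-- Otherwise `y`, followed by `x` in reverse, would be an alternating path to `x β`. -/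
theorem exists_common_vertex (hS : S.Regular n) (hx : S.IsShort n x L) (hy : S.IsShort n y c)
    (hadj : (S.edge c).Adj (y c) (x L)) (hpar : L % 2 = c % 2) (hlen : L + c = 2 * n)
    (hβ : S.LastHigh n x L β) :
    ∃ k, β ≤ k ∧ k ≤ L ∧ k ≤ c ∧ x k = y k ∧ 2 * n < S.ten (x k) := by
  by_contra! hno
  have hβL := hβ.le
  have hdisj : ∀ i j, i ≤ c → β ≤ j → j ≤ L → y i ≠ x j := by
    intro i j hi hβj hj heq
    obtain ⟨k, hkj, hki, hk, hhigh, hmax, -⟩ :=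
      hx.exists_common_apex hS hy hj hi (heq ▸ .rfl)
    have hβk := hmax β hβj (by have := hβ.lt_ten; omega)
    exact (hno k hβk (hkj.trans hj) (hki.trans hi) hk).not_gt hhigh
  have hjoin : S.IsPath (splice y c fun i ↦ x (2 * n + 1 - i)) (2 * n + 1 - β) :=
    IsAltSeq.splice_reverse S.edge_congr hy.path hx.path (by omega) le_rfl (by omega) (by omega)
      (fun i j hi hβj hj ↦ hdisj i j hi (by omega) (by omega))
      fun _ ↦ by rwa [show 2 * n + 1 - (c + 1) = L by omega]
  have hend : splice y c (fun i ↦ x (2 * n + 1 - i)) (2 * n + 1 - β) = x β := by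
    rw [splice_of_lt (by omega), show 2 * n + 1 - (2 * n + 1 - β) = β by omega]
  have := IsPath.ten_le hjoin (hx.path.take hβL) hend (by omega)
  have := hβ.lt_ten
  rw [hend] at *
  omega

theorem base_eq_of_adj (hS : S.Regular n) (hx : S.IsShort n x L) (hy : S.IsShort n y c)
    (hadj : (S.edge c).Adj (y c) (x L)) (hpar : L % 2 = c % 2) (hlen : L + c = 2 * n)
    (hβ : S.LastHigh n x L β) (hγ : S.LastHigh n y c γ)
    (hself : ∀ k ≤ L, k ≤ c → x k = y k → S.ten (x k) = 2 * n + 1 → S.SameBase n (x k) (x k)) :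
    x β = y γ := by
  obtain ⟨k, hβk, hkL, hkc, hk, hk'⟩ := hx.exists_common_vertex hS hy hadj hpar hlen hβ
  obtain ⟨l, hγl, hlc, hlL, hl, hl'⟩ := hy.exists_common_vertex hS hx
    (S.edge_congr hpar ▸ hadj.symm) hpar.symm (by omega) hγ
  rcases le_total k l with hkl | hlk
  · exact hx.base_eq_of_eq hS hy hβ hγ (hβk.trans hkl) hγl hlL hlc hl.symm (hl ▸ hl')
      (hself l hlL hlc hl.symm)
  · exact hx.base_eq_of_eq hS hy hβ hγ hβk (hγl.trans hlk) hkL hkc hk hk' (hself k hkL hkc hk)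

theorem of_length_le (hx : S.IsPath x L) (hr : S.Reached n (x L)) (hlen : L ≤ S.lvl n (x L))
    (hE : S.EvenType n (x L) ↔ L % 2 = 0) : S.IsShort n x L :=
  ⟨hx, hr, hlen.antisymm (IsPath.lvl_le hx le_rfl hE)⟩

end IsShort

namespace IsTight

theorem ne_of_turned (hS : S.Regular n) (hp : S.IsTight n p L) (hL : S.ten (p L) = 2 * n + 1)
    (htL : S.Turned n p L) (hs : S.IsShort n s h) (hsp : s h = p L) (hi : i ≤ h) (hj : j < L)
    (ht : S.Turned n p j) : s i ≠ p j := by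
  intro heq
  obtain ⟨l, hjl, hlL, hl, hlink⟩ := hp.exists_apex_of_turned hS (by omega) hj.le ht
  obtain ⟨k, hki, hk, hlink', -⟩ := hs.exists_apex hS hi
  have hkl : s k = p l := hS.apex n le_rfl (hlink'.trans (heq ▸ hlink)) hk hl
  have hlen := (hs.take hS (hki.trans hi) hk).length_eq
  have hlen' := hs.length_eq
  have hadd := (hp.lvl_add_of_turned hS hlL (hp.turned_mono hS hjl hlL ht) hl).1
  have hadd' := (hp.lvl_add_of_turned hS le_rfl htL (by omega)).1
  rw [hkl] at hlen
  rw [hsp] at hlen'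
  obtain rfl : i = h := by omega
  have := hp.path.inj le_rfl hj.le (hsp.symm.trans heq)
  omega

theorem isShort_splice (hS : S.Regular n) (hp : S.IsTight n p L)
    (hL : S.ten (p L) = 2 * n + 1) (htL : S.Turned n p L) (hm : m < L) (hsw : S.IsSwitch n p m)
    (hs : S.IsShort n s h) (hsp : s h = p L) :
    S.IsShort n (splice s h fun i ↦ p (2 * n + 1 - i)) (2 * n - m) ∧
      splice s h (fun i ↦ p (2 * n + 1 - i)) (2 * n - m) = p (m + 1) := by
  have hlen := hs.length_eq
  have hadd := (hp.lvl_add_of_turned hS le_rfl htL (by omega)).1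
  rw [← hsp, ← hlen] at hadd
  have hend : splice s h (fun i ↦ p (2 * n + 1 - i)) (2 * n - m) = p (m + 1) := by
    rcases eq_or_lt_of_le (show m + 1 ≤ L by omega) with hmL | hmL
    · rw [splice_of_le (by omega), show 2 * n - m = h by omega, hsp, hmL]
    · rw [splice_of_lt (by omega), show 2 * n + 1 - (2 * n - m) = m + 1 by omega]
  have hpath : S.IsPath (splice s h fun i ↦ p (2 * n + 1 - i)) (2 * n - m) := by
    refine IsAltSeq.splice_reverse S.edge_congr hs.path hp.path (by omega) le_rfl (by omega)
      (by omega) (fun i j hi hj hjL ↦ ?_) fun _ ↦ ?_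
    · exact hp.ne_of_turned hS hL htL hs hsp hi (by omega)
        (hp.turned_mono hS (by omega) (by omega) hsw.2)
    · have hadj := hp.path.adj (show L - 1 < L by omega)
      rw [show L - 1 + 1 = L by omega, S.edge_congr (show (L - 1) % 2 = h % 2 by omega)] at hadj
      rw [hsp, show 2 * n + 1 - (h + 1) = L - 1 by omega]
      exact hadj.symm
  obtain ⟨hE, hE'⟩ := hp.evenType_iff_of_isSwitch hS hm hsw
  have hlvl := hp.lvl_add_lvl_of_isSwitch hS hm hsw
  have hlvl_m := IsPath.lvl_le hp.path hm.le hE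
  refine ⟨.of_length_le hpath ?_ ?_ ?_, hend⟩
  · exact hend ▸ (hp.reached_of_isSwitch hS hm hsw).2
  · rw [hend]
    omega
  · rw [hend, hE']
    omega

theorem base_eq (hS : S.Regular n) (hp : S.IsTight n p L) (hL : S.ten (p L) = 2 * n + 1)
    (htL : S.Turned n p L) (hm : m < L) (hsw : S.IsSwitch n p m) (hs : S.IsShort n s h)
    (hsp : s h = p L) (hβ : S.LastHigh n p m β) (hγ : S.LastHigh n s h γ)
    (hself : ∀ w, S.ten w = 2 * n + 1 → S.lvl n w < h → S.SameBase n w w) : p β = s γ := by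
  obtain ⟨hq, hend⟩ := hp.isShort_splice hS hL htL hm hsw hs hsp
  set q := splice s h fun i ↦ p (2 * n + 1 - i) with hqdef
  have hlvl := hp.lvl_add_lvl_of_isSwitch hS hm hsw
  have hlen := hq.length_eq
  have hlen_s := hs.length_eq
  have hadd := (hp.lvl_add_of_turned hS le_rfl htL (by omega)).1
  rw [← hsp, ← hlen_s] at hadd
  rw [hend] at hlen
  have hp_m : S.IsShort n p m := .of_length_le (hp.path.take hm.le)
    (hp.reached_of_isSwitch hS hm hsw).1 (by omega) (hp.evenType_iff_of_isSwitch hS hm hsw).1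
  have hγq : S.LastHigh n q (2 * n - m) γ := by
    refine hγ.splice (by omega) fun i hhi him ↦ ?_
    by_contra! hlt
    have ht := hp.turned_mono hS (show m + 1 ≤ 2 * n + 1 - i by omega) (by omega) hsw.2
    have := (hp.lvl_add_of_turned hS (by omega) ht (by omega)).2
    omega
  have hadj : (S.edge (2 * n - m)).Adj (q (2 * n - m)) (p m) := by
    rw [hend, S.edge_congr (show (2 * n - m) % 2 = m % 2 by omega)]
    exact (hp.path.adj hm).symm
  rw [hp_m.base_eq_of_adj hS hq hadj (by omega) (by omega) hβ hγq, hqdef, splice_of_le hγ.le]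
  intro k hkm hkc hk hten
  refine hself _ hten ?_
  rw [← (hp_m.take hS hkm (by omega)).length_eq]
  by_contra! hhk
  rcases hhk.eq_or_lt with rfl | hhk
  · rw [hqdef, splice_of_le le_rfl, hsp] at hk
    have := hp.path.inj (by omega) le_rfl hk
    omega
  · rw [hqdef, splice_of_lt hhk] at hk
    have := hp.path.inj (by omega) (by omega) hk
    omega

end IsTight

theorem sameBase_self (hS : S.Regular n) (hn : 2 * n + 1 < S.bound) (hz : S.ten z = 2 * n + 1) :
    S.SameBase n z z := by
  induction hl : S.lvl n z using Nat.strong_induction_on generalizing z with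
  | _ l ih =>
    obtain ⟨p, L, hp, htL, rfl⟩ := exists_turned_path hS.lt_bound hz
    obtain ⟨m, hm, hsw⟩ := hp.exists_isSwitch hS htL
    obtain ⟨β, hβ⟩ := IsPath.exists_lastHigh hn (hp.path.take hm.le)
    suffices h : ∀ b, S.HasBase n (p L) b → p β = b from
      fun b d hb hd ↦ (h b hb).symm.trans (h d hd)
    rintro b ⟨s, h, γ, hs, hsp, hγ, rfl⟩
    refine hp.base_eq hS hz htL hm hsw hs hsp hβ hγ fun w hw hlt ↦ ih _ ?_ hw rfl
    rwa [← hl, ← hsp, ← hs.length_eq]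

theorem sameBase_of_reachable (hS : S.Regular n) (hn : 2 * n + 1 < S.bound)
    (huv : (S.low n).Reachable u v) : S.SameBase n u v := by
  rintro b d ⟨x, L, β, hx, rfl, hβ, rfl⟩ ⟨y, c, γ, hy, rfl, hγ, rfl⟩
  obtain ⟨k, hkL, hkc, hk, hhigh, hmax, hmax'⟩ := hx.exists_common_apex hS hy le_rfl le_rfl huv
  have hltβ := hβ.lt_ten
  have hltγ := hγ.lt_ten
  exact hx.base_eq_of_eq hS hy hβ hγ (hmax β hβ.le (by omega)) (hmax' γ hγ.le (by omega)) hkL hkc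
    hk hhigh (sameBase_self hS hn)

theorem sameBase_of_lvl_succ (hS : S.Regular n) (hn : 2 * n + 1 < S.bound)
    (huv : (S.edge (S.lvl n u)).Adj u v) (hlvl : S.lvl n v = S.lvl n u + 1)
    (hv : S.Reached n v) (hten : S.ten v = 2 * n + 1) : S.SameBase n u v := by
  rintro b d ⟨x, L, β, hx, rfl, hβ, rfl⟩ hd
  rw [← hx.length_eq] at huv hlvl
  have hne : ∀ i ≤ L, x i ≠ v := by
    rintro i hi rfl
    have := (hx.take hS hi (by omega)).length_eq
    omega
  have hend : splice x L (fun _ ↦ v) (L + 1) = v := splice_of_lt L.lt_succ_self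
  have hy : S.IsShort n (splice x L fun _ ↦ v) (L + 1) :=
    ⟨hx.path.snoc hne huv, by rwa [hend], by rw [hend, hlvl]⟩
  have hβy : S.LastHigh n (splice x L fun _ ↦ v) (L + 1) β :=
    hβ.splice L.le_succ fun _ _ _ ↦ hten.le
  have hbase := hβy.hasBase hy
  rw [hend, splice_of_le hβ.le] at hbase
  exact sameBase_self hS hn hten hbase hd

theorem sameBase_of_lvl_add (hS : S.Regular n) (hn : 2 * n + 1 < S.bound)
    (huv : (S.edge (S.lvl n v)).Adj u v) (hpar : S.lvl n u % 2 = S.lvl n v % 2)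
    (hlvl : S.lvl n u + S.lvl n v = 2 * n) : S.SameBase n u v := by
  rintro b d ⟨x, L, β, hx, rfl, hβ, rfl⟩ ⟨y, c, γ, hy, rfl, hγ, rfl⟩
  rw [← hx.length_eq, ← hy.length_eq] at hpar hlvl
  rw [← hy.length_eq] at huv
  exact hx.base_eq_of_adj hS hy huv.symm hpar hlvl hβ hγ fun _ _ _ _ ↦ sameBase_self hS hn

theorem lt_of_not_evenType (h : ¬S.EvenType n a) : n < S.ev a ∧ 2 * n < S.ten a := by
  unfold EvenType at h
  omega

theorem reached_of_low_succ (hn : 2 * n + 1 < S.bound) (huv : (S.low (n + 1)).Adj u v) :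
    S.Reached n u := by
  by_cases hu : S.EvenType n u
  · exact Or.inl hu
  obtain ⟨i, hadj, hten⟩ := huv
  have hpar := S.edgeTen_mod_two i u v
  have hev := S.ev_mod_two u
  have hev' := S.ev_mod_two v
  have ⟨hlt, hlt'⟩ := lt_of_not_evenType hu
  right
  rcases Nat.mod_two_eq_zero_or_one i with hi2 | hi2
  · rw [S.edge_of_even hi2] at hadj
    rw [edgeTen_of_even hi2] at hten hpar
    have := od_le_ev_add_one hadj.symm (by omega) (by omega)
    omega
  · rw [S.edge_of_odd hi2] at hadj
    rw [edgeTen_of_odd hi2] at hten hpar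
    have := ev_eq_of_matched hadj
    omega

theorem sameBase_of_evenType_of_not (hS : S.Regular n) (hn : 2 * n + 1 < S.bound)
    (hadj : (S.edge i).Adj u v) (hten : S.edgeTen i u v = 2 * n + 1) (hu : S.EvenType n u)
    (hv : ¬S.EvenType n v) : S.SameBase n u v := by
  have ⟨hlt, hlt'⟩ := lt_of_not_evenType hv
  have hlvl_u := lvl_of_evenType hu
  have hlvl_v := lvl_of_not_evenType hv
  rcases Nat.mod_two_eq_zero_or_one i with hi2 | hi2
  · rw [S.edge_of_even hi2] at hadj
    rw [edgeTen_of_even hi2] at hten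
    have hod := od_le_of_not_evenType hS.lt_bound hadj hv (by omega)
    unfold ten at hlt'
    have hadj' : (S.edge (S.lvl n u)).Adj u v := by
      rwa [hlvl_u, S.edge_of_even (S.ev_mod_two u)]
    exact sameBase_of_lvl_succ hS hn hadj' (by omega) (Or.inr (by omega)) (by unfold ten; omega)
  · rw [S.edge_of_odd hi2] at hadj
    rw [edgeTen_of_odd hi2] at hten
    have hev := ev_eq_of_matched hadj
    have hadj' : (S.edge (S.lvl n v)).Adj v u := by
      rw [hlvl_v, S.edge_of_odd (S.od_mod_two v)]
      exact hadj.symm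
    have hten' : S.ten u = 2 * n + 1 := by
      unfold ten
      omega
    exact SameBase.symm (sameBase_of_lvl_succ hS hn hadj' (by omega) (Or.inl hu) hten')

theorem sameBase_of_evenType_iff (hS : S.Regular n) (hn : 2 * n + 1 < S.bound)
    (hadj : (S.edge i).Adj u v) (hten : S.edgeTen i u v = 2 * n + 1)
    (huv : S.EvenType n u ↔ S.EvenType n v) : S.SameBase n u v := by
  suffices h : S.lvl n u + S.lvl n v = 2 * n ∧ S.lvl n v % 2 = i % 2 by
    have hpar : S.lvl n u % 2 = S.lvl n v % 2 := by omega
    exact sameBase_of_lvl_add hS hn (S.edge_congr h.2 ▸ hadj) hpar h.1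
  rcases Nat.mod_two_eq_zero_or_one i with hi2 | hi2
  · rw [edgeTen_of_even hi2] at hten
    have hu : S.EvenType n u := by
      by_contra hu
      have := lt_of_not_evenType hu
      have := lt_of_not_evenType (huv.not.mp hu)
      omega
    rw [lvl_of_evenType hu, lvl_of_evenType (huv.mp hu), S.ev_mod_two]
    omega
  · rw [S.edge_of_odd hi2] at hadj
    rw [edgeTen_of_odd hi2] at hten
    have hev := ev_eq_of_matched hadj
    have hev' := ev_eq_of_matched hadj.symm
    have hu : ¬S.EvenType n u := by
      intro hu
      have hv := huv.mp hu
      unfold EvenType ten at hu hv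
      omega
    rw [lvl_of_not_evenType hu, lvl_of_not_evenType (huv.not.mp hu), S.od_mod_two]
    omega

theorem sameBase_of_low_succ (hS : S.Regular n) (hn : 2 * n + 1 < S.bound)
    (huv : (S.low (n + 1)).Adj u v) : S.SameBase n u v := by
  by_cases hlink : (S.low n).Reachable u v
  · exact sameBase_of_reachable hS hn hlink
  obtain ⟨i, hadj, hle⟩ := huv
  have hpar := S.edgeTen_mod_two i u v
  have hgt : ¬S.edgeTen i u v ≤ 2 * n := fun h ↦ hlink (SimpleGraph.Adj.reachable ⟨i, hadj, h⟩)
  have hten : S.edgeTen i u v = 2 * n + 1 := by omega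
  by_cases hu : S.EvenType n u <;> by_cases hv : S.EvenType n v
  · exact sameBase_of_evenType_iff hS hn hadj hten (iff_of_true hu hv)
  · exact sameBase_of_evenType_of_not hS hn hadj hten hu hv
  · exact SameBase.symm
      (sameBase_of_evenType_of_not hS hn hadj.symm (S.edgeTen_comm i u v ▸ hten) hv hu)
  · exact sameBase_of_evenType_iff hS hn hadj hten (iff_of_false hu hv)

theorem sameBase_of_reachable_succ (hS : S.Regular n) (hn : 2 * n + 1 < S.bound)
    (huv : (S.low (n + 1)).Reachable u v) : S.SameBase n u v := by
  obtain ⟨q⟩ := huv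
  induction q with
  | nil => exact sameBase_of_reachable hS hn .rfl
  | cons hadj _ ih =>
    intro b d hb hd
    obtain ⟨e, he⟩ := exists_hasBase hn (reached_of_low_succ hn hadj.symm)
    exact (sameBase_of_low_succ hS hn hadj hb he).trans (ih he hd)

theorem reached_of_reachable_succ (hn : 2 * n + 1 < S.bound)
    (huv : (S.low (n + 1)).Reachable u v) (hne : u ≠ v) : S.Reached n u := by
  obtain ⟨q⟩ := huv
  cases q with
  | nil => exact absurd rfl hne
  | cons hadj _ => exact reached_of_low_succ hn hadj

theorem Regular.uniqueApex_succ (hS : S.Regular n) (hn : 2 * n + 1 < S.bound) :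
    S.UniqueApex (n + 1) := by
  intro u v huv hu hv
  by_contra hne
  have hru := reached_of_reachable_succ hn huv hne
  have hrv := reached_of_reachable_succ hn huv.symm (Ne.symm hne)
  exact hne (sameBase_of_reachable_succ hS hn huv (hasBase_self hS.lt_bound hru (by omega))
    (hasBase_self hS.lt_bound hrv (by omega)))

theorem uniqueApex_zero (S : AltLevels α) : S.UniqueApex 0 := by
  rintro u v ⟨q⟩ - -
  cases q with
  | nil => rfl
  | cons hadj _ =>
    obtain ⟨i, -, hle⟩ := hadj
    exact absurd hle (Nat.not_succ_le_zero _)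

theorem regular (hn : 2 * n < S.bound) : S.Regular n := by
  induction n with
  | zero => exact ⟨hn, fun j hj ↦ Nat.le_zero.mp hj ▸ S.uniqueApex_zero⟩
  | succ n ih =>
    have hS := ih (by omega)
    refine ⟨hn, fun j hj ↦ ?_⟩
    rcases hj.eq_or_lt with rfl | hj
    · exact hS.uniqueApex_succ (by omega)
    · exact hS.apex j (by omega)

/-! ### Bridges -/

/-- `u` is a predecessor of `v`: the edge `u v` is the last one on a minimum level path to `v`. -/
def Precedes (S : AltLevels α) (u v : α) : Prop :=
  ∃ x l, S.IsPath x (l + 1) ∧ x l = u ∧ x (l + 1) = v ∧ l + 1 = min (S.ev v) (S.od v)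

theorem Precedes.level_lt (h : S.Precedes u v) (hadj : (S.edge i).Adj u v) :
    S.level i u < S.level (i + 1) v ∧ S.level (i + 1) v < S.level i v := by
  obtain ⟨x, l, hx, rfl, rfl, hmin⟩ := h
  have hadj' := hx.adj l.lt_succ_self
  have hpar : i % 2 = l % 2 := by
    rcases Nat.mod_two_eq_zero_or_one i with hi | hi <;>
      rcases Nat.mod_two_eq_zero_or_one l with hl | hl
    · omega
    · rw [S.edge_of_even hi] at hadj
      rw [S.edge_of_odd hl] at hadj'
      exact absurd hadj' (S.disjoint_edge hadj)
    · rw [S.edge_of_odd hi] at hadj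
      rw [S.edge_of_even hl] at hadj'
      exact absurd hadj (S.disjoint_edge hadj')
    · omega
  rw [S.level_congr hpar, S.level_congr (show (i + 1) % 2 = (l + 1) % 2 by omega)]
  have hu := S.level_le (hx.take l.le_succ)
  have hv := S.level_le hx
  have hev := S.ev_mod_two (x (l + 1))
  have hod := S.od_mod_two (x (l + 1))
  rcases Nat.mod_two_eq_zero_or_one l with hl | hl
  · rw [S.level_of_odd (show (l + 1) % 2 = 1 by omega)] at *
    rw [S.level_of_even hl (x (l + 1))]
    omega
  · rw [S.level_of_even (show (l + 1) % 2 = 0 by omega)] at *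
    rw [S.level_of_odd hl (x (l + 1))]
    omega

theorem precedes_of_level (hadj : (S.edge i).Adj u v) (hu : S.level i u ≤ S.bound)
    (hsucc : S.level (i + 1) v = S.level i u + 1) (hlt : S.level (i + 1) v < S.level i v) :
    S.Precedes u v := by
  obtain ⟨x, hx, hxu⟩ := S.exists_altSeq hu
  have hmin : S.level (i + 1) v = min (S.ev v) (S.od v) := by
    rcases Nat.mod_two_eq_zero_or_one i with hi | hi
    · rw [S.level_of_odd (show (i + 1) % 2 = 1 by omega), S.level_of_even hi] at *
      exact (min_eq_right hlt.le).symm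
    · rw [S.level_of_even (show (i + 1) % 2 = 0 by omega), S.level_of_odd hi] at *
      exact (min_eq_left hlt.le).symm
  have hv : ∀ j ≤ S.level i u, x j ≠ v := by
    rintro j hj rfl
    have hle := S.level_le (hx.take hj)
    rcases Nat.mod_two_eq_zero_or_one j with hj2 | hj2
    · rw [S.level_of_even hj2] at hle
      omega
    · rw [S.level_of_odd hj2] at hle
      omega
  refine ⟨_, _, hx.snoc hv ?_, ?_, splice_of_lt (Nat.lt_succ_self _), by omega⟩
  · rwa [hxu, S.edge_congr (S.level_mod_two i u)]
  · rw [splice_of_le le_rfl, hxu]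

namespace IsTight

theorem not_precedes_of_isSwitch (hS : S.Regular n) (hx : S.IsTight n x L) (hm : m < L)
    (hsw : S.IsSwitch n x m) :
    ¬S.Precedes (x m) (x (m + 1)) ∧ ¬S.Precedes (x (m + 1)) (x m) := by
  have hadj := hx.path.adj hm
  have hten := hx.edgeTen_of_isSwitch hS hm hsw
  have htype := hx.evenType_iff_of_isSwitch hS hm hsw
  suffices h : ∀ u v, (S.edge m).Adj u v → S.edgeTen m u v = 2 * n + 1 →
      (S.EvenType n v ↔ m % 2 = 0) → (m % 2 = 1 → S.od v = n) → ¬S.Precedes u v by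
    have hod := hx.odd_arc_of_isSwitch hS hm hsw
    exact ⟨h _ _ hadj hten htype.2 fun hm2 ↦ (hod hm2).2,
      h _ _ hadj.symm (S.edgeTen_comm m _ _ ▸ hten) htype.1 fun hm2 ↦ (hod hm2).1⟩
  intro u v huv huvten hE hod hprec
  have hlt := hprec.level_lt huv
  rcases Nat.mod_two_eq_zero_or_one m with hm2 | hm2
  · rw [S.level_of_even hm2, S.level_of_even hm2, S.level_of_odd (by omega)] at hlt
    rw [edgeTen_of_even hm2] at huvten
    have hE := hE.mpr hm2
    unfold EvenType ten at hE
    omega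
  · rw [S.level_of_odd hm2, S.level_of_odd hm2, S.level_of_even (by omega)] at hlt
    have hE : ¬S.EvenType n v := by simp [hE, hm2]
    have := lt_of_not_evenType hE
    have := hod hm2
    omega

theorem not_evenType_iff (hS : S.Regular n) (hx : S.IsTight n x L) (hi : i < L)
    (hten : S.edgeTen i (x i) (x (i + 1)) = 2 * n + 1) (hsw : ¬S.IsSwitch n x i) :
    ¬(S.EvenType n (x i) ↔ S.EvenType n (x (i + 1))) := by
  refine fun htype ↦ hsw (hx.isSwitch_of_evenType_iff hS hi (fun hlink ↦ ?_) htype)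
  have hadj := hx.path.adj hi
  rcases Nat.mod_two_eq_zero_or_one i with hi2 | hi2
  · have := even_arc_of_reachable hS.lt_bound hi2 hadj (hx.slack_eq_zero hS hi) hlink
    omega
  · have := odd_arc_of_reachable hS hi2 hadj hlink
    omega

end IsTight

theorem precedes_or_precedes_of_evenType (hn : 2 * n < S.bound) (hadj : (S.edge i).Adj u v)
    (hten : S.edgeTen i u v = 2 * n + 1) (hu : S.EvenType n u) (hv : ¬S.EvenType n v) :
    S.Precedes u v ∨ S.Precedes v u := by
  have hv' := lt_of_not_evenType hv
  rcases Nat.mod_two_eq_zero_or_one i with hi2 | hi2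
  · rw [edgeTen_of_even hi2] at hten
    rw [S.edge_of_even hi2] at hadj
    have hod := od_le_of_not_evenType hn hadj hv (by omega)
    unfold ten at hv'
    left
    refine precedes_of_level (i := 0) hadj ?_ ?_ ?_
    · change S.ev u ≤ _
      omega
    · change S.od v = S.ev u + 1
      omega
    · change S.od v < S.ev v
      omega
  · rw [edgeTen_of_odd hi2] at hten
    rw [S.edge_of_odd hi2] at hadj
    have hev := ev_eq_of_matched hadj
    have hev' := ev_eq_of_matched hadj.symm
    unfold EvenType ten at hu
    right
    refine precedes_of_level (i := 1) hadj.symm ?_ ?_ ?_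
    · change S.od v ≤ _
      omega
    · rwa [S.level_of_even rfl]
    · rw [S.level_of_even rfl]
      change S.ev u < S.od u
      omega

/-- The bridge is the step at which the path turns. -/
theorem existsUnique_bridge (hn : 2 * n < S.bound) (hx : S.IsPath x L)
    (hten : S.ten (x L) = 2 * n + 1) (hL : L = max (S.ev (x L)) (S.od (x L))) :
    ∃! m, m < L ∧ S.edgeTen m (x m) (x (m + 1)) = 2 * n + 1 ∧
      ¬S.Precedes (x m) (x (m + 1)) ∧ ¬S.Precedes (x (m + 1)) (x m) := by
  have hS := S.regular hn
  have htight := IsPath.isTight_of_eq_max hx hten hL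
  obtain ⟨m, hm, hsw⟩ := htight.exists_isSwitch hS (turned_of_eq_max hten hL)
  refine ⟨m, ⟨hm, htight.edgeTen_of_isSwitch hS hm hsw,
    htight.not_precedes_of_isSwitch hS hm hsw⟩, ?_⟩
  rintro i ⟨hi, hiten, hprec, hprec'⟩
  refine htight.isSwitch_unique hS hi hm (by_contra fun hsi ↦ ?_) hsw
  have htype := htight.not_evenType_iff hS hi hiten hsi
  have hadj := hx.adj hi
  by_cases hE : S.EvenType n (x i) <;> by_cases hE' : S.EvenType n (x (i + 1))
  · exact htype (iff_of_true hE hE')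
  · have := precedes_or_precedes_of_evenType hn hadj hiten hE hE'
    tauto
  · have := precedes_or_precedes_of_evenType hn hadj.symm (S.edgeTen_comm i _ _ ▸ hiten) hE' hE
    tauto
  · exact htype (iff_of_false hE hE')

end AltLevels

/-! ### Levels of a matching -/

section Graph

variable {W : Type*} {G : SimpleGraph W} {M : G.Subgraph} {a b f u v : W} {x : ℕ → W}
variable {i j k n L : ℕ}

/-- The edges that an alternating path may use at step `i`. -/
noncomputable def altEdges (G : SimpleGraph W) (M : G.Subgraph) (i : ℕ) : SimpleGraph W :=
  if Odd i then M.spanningCoe else G \ M.spanningCoe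

theorem altEdges_adj : (altEdges G M i).Adj a b ↔ G.Adj a b ∧ (M.Adj a b ↔ Odd i) := by
  by_cases hi : Odd i
  · simpa [altEdges, hi] using M.adj_sub
  · simp [altEdges, hi]

theorem altEdges_one_adj : (altEdges G M 1).Adj a b ↔ M.Adj a b := by simp [altEdges]

theorem altEdges_congr (h : i % 2 = j % 2) : altEdges G M i = altEdges G M j := by
  simp only [altEdges, Nat.odd_iff, h]

theorem isAlt_iff_getVert (w : G.Walk u v) :
    IsAlt G M w ↔ ∀ i < w.length, (M.Adj (w.getVert i) (w.getVert (i + 1)) ↔ Odd i) := by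
  simp only [IsAlt, List.get_eq_getElem, SimpleGraph.Walk.getElem_edges,
    SimpleGraph.Subgraph.mem_edgeSet, SimpleGraph.Walk.length_edges]

theorem isAltSeq_getVert {w : G.Walk f v} (hf : f ∉ M.verts) (hw : w.IsPath) (halt : IsAlt G M w) :
    IsAltSeq (altEdges G M) w.getVert w.length where
  exposed _ h := hf (M.edge_vert (w.getVert_zero ▸ altEdges_one_adj.mp h))
  inj hi hj h := hw.getVert_injOn hi hj h
  adj hi := altEdges_adj.mpr ⟨w.adj_getVert_succ hi, (isAlt_iff_getVert w).mp halt _ hi⟩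

theorem exists_walk_getVert_eq (L : ℕ) (hx : ∀ i < L, G.Adj (x i) (x (i + 1))) :
    ∃ w : G.Walk (x 0) (x L), w.length = L ∧ ∀ i ≤ L, w.getVert i = x i := by
  induction L generalizing x with
  | zero => exact ⟨.nil, rfl, fun i hi ↦ by simp [Nat.le_zero.mp hi]⟩
  | succ L ih =>
    obtain ⟨w, hlen, hw⟩ := ih (x := fun i ↦ x (i + 1)) fun i hi ↦ hx (i + 1) (by omega)
    refine ⟨.cons (hx 0 (by omega)) w, by simp [hlen], fun i hi ↦ ?_⟩
    cases i with
    | zero => rfl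
    | succ i => rw [SimpleGraph.Walk.getVert_cons_succ, hw i (by omega)]

theorem notMem_verts (hM : M.IsMatching) (hv : ∀ b, ¬M.Adj v b) : v ∉ M.verts := fun h ↦
  have ⟨b, hb, _⟩ := hM h
  hv b hb

theorem IsAltSeq.exists_walk (hM : M.IsMatching) (hx : IsAltSeq (altEdges G M) x L) :
    x 0 ∉ M.verts ∧ ∃ w : G.Walk (x 0) (x L), w.IsPath ∧ IsAlt G M w ∧ w.length = L ∧
      ∀ i ≤ L, w.getVert i = x i := by
  refine ⟨notMem_verts hM fun b hb ↦ hx.exposed b (altEdges_one_adj.mpr hb), ?_⟩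
  obtain ⟨w, hlen, hw⟩ :=
    exists_walk_getVert_eq (G := G) L fun i hi ↦ (altEdges_adj.mp (hx.adj hi)).1
  refine ⟨w, ?_, (isAlt_iff_getVert w).mpr fun i hi ↦ ?_, hlen, hw⟩
  · refine (SimpleGraph.Walk.IsPath.getVert_injOn_iff w).mp fun i hi j hj h ↦ ?_
    rw [Set.mem_ofPred, hlen] at hi hj
    rw [hw i hi, hw j hj] at h
    exact hx.inj hi hj h
  · rw [hw i (by omega), hw (i + 1) (by omega)]
    exact (altEdges_adj.mp (hx.adj (by omega))).2

/-- The even or the odd level of `v`, according to the parity of `i`. -/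
noncomputable def altLevel (G : SimpleGraph W) (M : G.Subgraph) (i : ℕ) (v : W) : ℕ∞ :=
  if Odd i then oddlevel G M v else evenlevel G M v

theorem altLevel_zero (v : W) : altLevel G M 0 v = evenlevel G M v := by simp [altLevel]

theorem altLevel_one (v : W) : altLevel G M 1 v = oddlevel G M v := by simp [altLevel]

theorem altLevel_congr (h : i % 2 = j % 2) : altLevel G M i = altLevel G M j := by
  funext v
  simp only [altLevel, Nat.odd_iff, h]

theorem altLevel_eq_sInf (i : ℕ) (v : W) :
    altLevel G M i v = sInf {n : ℕ∞ | ∃ (f : W) (w : G.Walk f v),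
      f ∉ M.verts ∧ w.IsPath ∧ IsAlt G M w ∧ w.length % 2 = i % 2 ∧ n = w.length} := by
  by_cases hi : Odd i
  · simp only [altLevel, hi, if_true, oddlevel, Nat.odd_iff, Nat.odd_iff.mp hi]
  · simp only [altLevel, hi, if_false, evenlevel, Nat.even_iff, Nat.not_odd_iff.mp hi]

theorem altLevel_le (hM : M.IsMatching) (hx : IsAltSeq (altEdges G M) x L) :
    altLevel G M L (x L) ≤ L := by
  obtain ⟨hf, w, hw, halt, hlen, -⟩ := hx.exists_walk hM
  rw [altLevel_eq_sInf]
  exact sInf_le ⟨x 0, w, hf, hw, halt, by rw [hlen], by rw [hlen]⟩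

theorem exists_isAltSeq_of_altLevel_eq (h : altLevel G M i v = k) :
    k % 2 = i % 2 ∧ ∃ x, IsAltSeq (altEdges G M) x k ∧ x k = v := by
  rw [altLevel_eq_sInf] at h
  have hne : {n : ℕ∞ | ∃ (f : W) (w : G.Walk f v), f ∉ M.verts ∧ w.IsPath ∧ IsAlt G M w ∧
      w.length % 2 = i % 2 ∧ n = w.length}.Nonempty :=
    Set.nonempty_iff_ne_empty.mpr fun hempty ↦ by
      rw [hempty, sInf_empty] at h
      exact ENat.top_ne_natCast k h
  obtain ⟨f, w, hf, hw, halt, hpar, hlen⟩ := h ▸ csInf_mem hne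
  obtain rfl : k = w.length := by exact_mod_cast hlen
  exact ⟨hpar, w.getVert, isAltSeq_getVert hf hw halt, w.getVert_length⟩

theorem altLevel_zero_le_of_adj (hM : M.IsMatching) (hab : M.Adj a b) :
    altLevel G M 0 a ≤ altLevel G M 1 b + 1 := by
  cases hb : altLevel G M 1 b with
  | top => exact le_top
  | coe k =>
    obtain ⟨hk, x, hx, rfl⟩ := exists_isAltSeq_of_altLevel_eq hb
    by_cases ha : ∀ i ≤ k, x i ≠ a
    · have hadj : (altEdges G M k).Adj (x k) a :=
        altEdges_congr (j := 1) hk ▸ altEdges_one_adj.mpr hab.symm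
      have hle := altLevel_le hM (hx.snoc ha hadj)
      rw [splice_of_lt k.lt_succ_self, altLevel_congr (show (k + 1) % 2 = 0 % 2 by omega)] at hle
      exact_mod_cast hle
    · push Not at ha
      obtain ⟨i, hi, rfl⟩ := ha
      have hi2 : i % 2 = 0 := by
        by_contra hi2
        have hne : i ≠ k := by
          rintro rfl
          exact hab.ne rfl
        have hadj := hx.adj (show i < k by omega)
        rw [altEdges_congr (show i % 2 = 1 % 2 by omega), altEdges_one_adj] at hadj
        have := hx.inj (by omega) le_rfl ((hM (M.edge_vert hab)).unique hadj hab)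
        omega
      have hle := altLevel_le hM (hx.take hi)
      rw [altLevel_congr (j := 0) hi2] at hle
      exact hle.trans (by exact_mod_cast hi.trans k.le_succ)

theorem altLevel_one_add_one_le_of_adj (hM : M.IsMatching) (hab : M.Adj a b) :
    altLevel G M 1 b + 1 ≤ altLevel G M 0 a := by
  cases ha : altLevel G M 0 a with
  | top => exact le_top
  | coe k =>
    obtain ⟨hk, x, hx, rfl⟩ := exists_isAltSeq_of_altLevel_eq ha
    cases k with
    | zero => exact absurd (altEdges_one_adj.mpr hab) (hx.exposed b)
    | succ k =>
      have hadj := hx.adj k.lt_succ_self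
      rw [altEdges_congr (show k % 2 = 1 % 2 by omega), altEdges_one_adj] at hadj
      have hle := altLevel_le hM (hx.take k.le_succ)
      rw [(hM (M.edge_vert hab)).unique hadj.symm hab,
        altLevel_congr (show k % 2 = 1 % 2 by omega)] at hle
      push_cast
      gcongr

theorem altLevel_zero_eq_of_adj (hM : M.IsMatching) (hab : M.Adj a b) :
    altLevel G M 0 a = altLevel G M 1 b + 1 :=
  (altLevel_zero_le_of_adj hM hab).antisymm (altLevel_one_add_one_le_of_adj hM hab)

/-- `altLevel` as a natural number. Levels above `2 * n + 2` are irrelevant for tenacity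
`2 * n + 1`; they are replaced by `2 * n + 3` or `2 * n + 4`, whichever has the right parity. -/
noncomputable def cappedLevel (G : SimpleGraph W) (M : G.Subgraph) (n i : ℕ) (v : W) : ℕ :=
  (min (altLevel G M i v) (2 * n + 4 - i % 2 : ℕ)).toNat

theorem coe_cappedLevel (n i : ℕ) (v : W) :
    (cappedLevel G M n i v : ℕ∞) = min (altLevel G M i v) (2 * n + 4 - i % 2 : ℕ) :=
  ENat.natCast_toNat (ne_top_of_le_ne_top (ENat.natCast_ne_top _) (min_le_right _ _))

theorem cappedLevel_eq_iff (hk : k ≤ 2 * n + 2) :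
    cappedLevel G M n i v = k ↔ altLevel G M i v = k := by
  rw [← ENat.natCast_inj, coe_cappedLevel]
  cases altLevel G M i v with
  | top =>
    simp only [le_top, inf_of_le_right, ENat.natCast_inj, ENat.top_ne_natCast, iff_false]
    omega
  | coe l =>
    have := Nat.mod_lt i two_pos
    rw [← Nat.mono_cast.map_min, ENat.natCast_inj, ENat.natCast_inj]
    omega

theorem cappedLevel_mod_two (i : ℕ) (v : W) : cappedLevel G M n i v % 2 = i % 2 := by
  have hcapped := coe_cappedLevel (G := G) (M := M) n i v
  cases h : altLevel G M i v with
  | top =>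
    rw [h, min_eq_right le_top, ENat.natCast_inj] at hcapped
    omega
  | coe l =>
    have hl := (exists_isAltSeq_of_altLevel_eq h).1
    rw [h, ← Nat.mono_cast.map_min, ENat.natCast_inj] at hcapped
    omega

theorem cappedLevel_zero_eq_of_adj (hM : M.IsMatching) (hab : M.Adj a b) :
    cappedLevel G M n 0 a = cappedLevel G M n 1 b + 1 := by
  rw [← ENat.natCast_inj, Nat.cast_succ, coe_cappedLevel, coe_cappedLevel,
    altLevel_zero_eq_of_adj hM hab, ← min_add_add_right]
  rfl

/-- The system of alternating levels for vertices of tenacity `2 * n + 1`. -/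
noncomputable def altLevels (hM : M.IsMatching) (hlm : (2 * n + 1 : ℕ) ≤ lm G M) :
    AltLevels W where
  edge := altEdges G M
  level := cappedLevel G M n
  bound := 2 * n + 1
  edge_congr := altEdges_congr
  level_congr h := by
    funext v
    simp only [cappedLevel, altLevel_congr h, h]
  level_mod_two := cappedLevel_mod_two
  disjoint_edge h h' := by simp_all [altEdges]
  level_le hx := by
    exact_mod_cast (coe_cappedLevel _ _ _).trans_le ((min_le_left _ _).trans (altLevel_le hM hx))
  exists_altSeq h :=
    (exists_isAltSeq_of_altLevel_eq ((cappedLevel_eq_iff (by omega)).mp rfl)).2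
  level_zero_of_matched h := cappedLevel_zero_eq_of_adj hM (altEdges_one_adj.mp h)
  bound_le {x L} hx hL hexp := by
    obtain ⟨hf, w, hw, halt, hlen, -⟩ := hx.exists_walk hM
    have hg : x L ∉ M.verts := notMem_verts hM fun b hb ↦ hexp b (altEdges_one_adj.mpr hb)
    have hne : x 0 ≠ x L := fun h ↦ by
      have := hx.inj (Nat.zero_le L) le_rfl h
      omega
    have hle : lm G M ≤ L := sInf_le ⟨x 0, x L, w, hf, hg, hne, hw, halt,
      by rw [hlen, Nat.odd_iff, hL], by rw [hlen]⟩
    exact_mod_cast hlm.trans hle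

theorem cappedLevel_congr (h : i % 2 = j % 2) : cappedLevel G M n i = cappedLevel G M n j := by
  funext v
  simp only [cappedLevel, altLevel_congr h, h]

theorem min_cappedLevel_eq_minlevel (hi : cappedLevel G M n i v ≤ 2 * n + 2) :
    (min (cappedLevel G M n 0 v) (cappedLevel G M n 1 v) : ℕ) = minlevel G M v := by
  have hmin : min (cappedLevel G M n 0 v) (cappedLevel G M n 1 v) ≤ 2 * n + 2 := by
    rcases Nat.mod_two_eq_zero_or_one i with hi2 | hi2
    · rw [cappedLevel_congr (j := 0) hi2] at hi
      exact (min_le_left _ _).trans hi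
    · rw [cappedLevel_congr (j := 1) hi2] at hi
      exact (min_le_right _ _).trans hi
  have hcapped : (min (cappedLevel G M n 0 v) (cappedLevel G M n 1 v) : ℕ) =
      min (minlevel G M v) (2 * n + 3 : ℕ) := by
    rw [Nat.mono_cast.map_min, coe_cappedLevel, coe_cappedLevel, min_min_min_comm,
      altLevel_zero, altLevel_one, ← Nat.mono_cast.map_min, minlevel]
    congr 2
    omega
  rcases min_choice (minlevel G M v) (2 * n + 3 : ℕ) with h | h
  · exact hcapped.trans h
  · rw [h, ENat.natCast_inj] at hcapped
    omega

section Levels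

variable {hM : M.IsMatching} {hlm : (2 * n + 1 : ℕ) ≤ lm G M}

theorem isPred_iff_precedes (hi : cappedLevel G M n i v ≤ 2 * n + 2) :
    IsPred G M u v ↔ (altLevels hM hlm).Precedes u v := by
  simp only [IsPred, ← min_cappedLevel_eq_minlevel hi, ENat.natCast_inj]
  constructor
  · rintro ⟨f, w, hf, hw, halt, hlen, hpos, hu⟩
    refine ⟨w.getVert, w.length - 1, ?_, hu, ?_, ?_⟩ <;> rw [Nat.sub_add_cancel hpos]
    · exact isAltSeq_getVert hf hw halt
    · exact w.getVert_length
    · exact hlen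
  · rintro ⟨x, l, hx, rfl, rfl, hlen⟩
    obtain ⟨hx0, w, hw, halt, hwlen, hget⟩ := hx.exists_walk hM
    refine ⟨x 0, w, hx0, hw, halt, hwlen.trans hlen, by omega, ?_⟩
    rw [hwlen, Nat.add_sub_cancel, hget l l.le_succ]

theorem edgeTenacity_eq_iff (hadj : (altEdges G M i).Adj a b) :
    edgeTenacity G M a b = (2 * n + 1 : ℕ) ↔
      (altLevels hM hlm).edgeTen i a b = 2 * n + 1 := by
  have hten : edgeTenacity G M a b = altLevel G M i a + altLevel G M i b + 1 := by
    rw [edgeTenacity, SimpleGraph.Subgraph.mem_edgeSet, (altEdges_adj.mp hadj).2]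
    by_cases hi : Odd i <;> simp only [altLevel, hi, if_true, if_false]
  rw [hten]
  change _ ↔ cappedLevel G M n i a + cappedLevel G M n i b + 1 = 2 * n + 1
  constructor
  · intro h
    cases ha : altLevel G M i a with
    | top => exact absurd h.symm (by simpa only [ha, top_add] using ENat.natCast_ne_top _)
    | coe k =>
      cases hb : altLevel G M i b with
      | top =>
        exact absurd h.symm (by simpa only [hb, add_top, top_add] using ENat.natCast_ne_top _)
      | coe l =>
        rw [ha, hb] at h
        have hkl : k + l + 1 = 2 * n + 1 := by exact_mod_cast h
        rwa [(cappedLevel_eq_iff (by omega)).mpr ha, (cappedLevel_eq_iff (by omega)).mpr hb]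
  · intro h
    rw [(cappedLevel_eq_iff (by omega)).mp (rfl : cappedLevel G M n i a = _),
      (cappedLevel_eq_iff (by omega)).mp (rfl : cappedLevel G M n i b = _)]
    exact_mod_cast h

theorem isBridge_and_edgeTenacity_eq_iff (hadj : (altEdges G M i).Adj a b) :
    edgeTenacity G M a b = (2 * n + 1 : ℕ) ∧ IsBridge G M a b ↔
      (altLevels hM hlm).edgeTen i a b = 2 * n + 1 ∧
        ¬(altLevels hM hlm).Precedes a b ∧ ¬(altLevels hM hlm).Precedes b a := by
  rw [edgeTenacity_eq_iff hadj]
  refine and_congr_right fun h ↦ ?_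
  change cappedLevel G M n i a + cappedLevel G M n i b + 1 = 2 * n + 1 at h
  rw [IsBridge, isPred_iff_precedes (n := n) (i := i) (by omega),
    isPred_iff_precedes (n := n) (i := i) (by omega)]
  exact and_iff_right (altEdges_adj.mp hadj).1

end Levels

theorem exists_tenacity_eq (hv : maxlevel G M v ≠ ⊤) : ∃ n : ℕ, tenacity G M v = (2 * n + 1 : ℕ) ∧
    cappedLevel G M n 0 v + cappedLevel G M n 1 v = 2 * n + 1 ∧
    maxlevel G M v = (max (cappedLevel G M n 0 v) (cappedLevel G M n 1 v) : ℕ) := by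
  obtain ⟨e, he⟩ := ENat.ne_top_iff_exists.mp (ne_top_of_le_ne_top hv (le_max_left _ _))
  obtain ⟨o, ho⟩ := ENat.ne_top_iff_exists.mp (ne_top_of_le_ne_top hv (le_max_right _ _))
  have hev : altLevel G M 0 v = e := (altLevel_zero v).trans he.symm
  have hod : altLevel G M 1 v = o := (altLevel_one v).trans ho.symm
  have hepar := (exists_isAltSeq_of_altLevel_eq hev).1
  have hopar := (exists_isAltSeq_of_altLevel_eq hod).1
  obtain ⟨n, hn⟩ : ∃ n, e + o = 2 * n + 1 := ⟨(e + o) / 2, by omega⟩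
  refine ⟨n, ?_, ?_, ?_⟩
  · rw [tenacity, ← he, ← ho, ← hn, Nat.cast_add]
  · rwa [(cappedLevel_eq_iff (by omega)).mpr hev, (cappedLevel_eq_iff (by omega)).mpr hod]
  · rw [(cappedLevel_eq_iff (by omega)).mpr hev, (cappedLevel_eq_iff (by omega)).mpr hod,
      maxlevel, ← he, ← ho, Nat.mono_cast.map_max]

theorem edgeTenacity_comm (a b : W) : edgeTenacity G M a b = edgeTenacity G M b a := by
  rw [edgeTenacity, edgeTenacity, Sym2.eq_swap, add_comm (oddlevel G M a),
    add_comm (evenlevel G M a)]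

theorem IsBridge.symm (h : IsBridge G M a b) : IsBridge G M b a := ⟨h.1.symm, h.2.2, h.2.1⟩

end Graph

/-- On any `maxlevel(v)` path, where `tenacity(v) = t ≤ l_m`, there is exactly one
bridge of tenacity `t`. -/
theorem stmt15 (G : SimpleGraph V) (M : G.Subgraph) (hM : M.IsMatching)
    (v : V) (t : ℕ∞) (ht : tenacity G M v = t) (hlm : t ≤ lm G M)
    (f : V) (w : G.Walk f v) (hf : f ∉ M.verts) (hp : w.IsPath) (halt : IsAlt G M w)
    (hlen : (w.length : ℕ∞) = maxlevel G M v) :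
    ∃ a b : V, s(a, b) ∈ w.edges ∧ IsBridge G M a b ∧ edgeTenacity G M a b = t ∧
      ∀ c d : V, s(c, d) ∈ w.edges → IsBridge G M c d → edgeTenacity G M c d = t →
        s(c, d) = s(a, b) := by
  obtain ⟨n, hn, hten, hmax⟩ := exists_tenacity_eq (hlen ▸ ENat.natCast_ne_top w.length)
  obtain rfl : t = (2 * n + 1 : ℕ) := ht.symm.trans hn
  have hseq := isAltSeq_getVert hf hp halt
  have hbridge {i} (hi : i < w.length) :=
    isBridge_and_edgeTenacity_eq_iff (hM := hM) (hlm := hlm) (hseq.adj hi)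
  obtain ⟨m, ⟨hm, hmbridge⟩, huniq⟩ := AltLevels.existsUnique_bridge
    (S := altLevels hM hlm) (n := n) (Nat.lt_succ_self _) hseq
    (by rw [w.getVert_length]; exact hten)
    (by rw [w.getVert_length]; exact_mod_cast hlen.trans hmax)
  obtain ⟨hmten, hmbr⟩ := (hbridge hm).mpr hmbridge
  refine ⟨_, _, w.mk_mem_edges_iff_exists.mpr ⟨m, hm, rfl⟩, hmbr, hmten,
    fun c d hcd hbr hten' ↦ ?_⟩
  obtain ⟨i, hi, hicd⟩ := w.mk_mem_edges_iff_exists.mp hcd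
  suffices h : edgeTenacity G M (w.getVert i) (w.getVert (i + 1)) = (2 * n + 1 : ℕ) ∧
      IsBridge G M (w.getVert i) (w.getVert (i + 1)) by
    rw [← hicd, huniq i ⟨hi, (hbridge hi).mp h⟩]
  rcases Sym2.eq_iff.mp hicd with ⟨hc, hd⟩ | ⟨hc, hd⟩ <;> rw [hc, hd]
  exacts [⟨hten', hbr⟩, ⟨edgeTenacity_comm c d ▸ hten', hbr.symm⟩]

end MV
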